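/- Let q be an odd prime power, d ≥ 4, t ∈ F_q nonzero, E ⊆ F_q^d. For fixed distinct y, z ∈ E, the number of tuples (x^1, ..., x^d) of points in E, each at distance t from both y and z, pairwise distinct, with {x^1,...,x^d} affinely dependent, is at most k_{(y,z)}^{d−1} · 2q^{d−3}, where k_{(y,z)} is the number of common poles of y and z in E. -/

import Mathlib

/-!
In homogeneous coordinates `(1, w - y)` the common poles `w` of `y` and `z` lie on a quadric
`B v v = 0` inside the `d`-dimensional kernel of the functional cutting out their perpendicular
bisector, the radical of `B` there has dimension at most one, and affine dependence becomes linear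
dependence. It therefore suffices to bound from below the number of linearly independent `d`-tuples
of points of the quadric when there are at least `2 q ^ (d - 3)` points; otherwise the bound is
trivial.

Independent tuples are extended one or two points at a time, each time discarding the points in the
subspace already spanned, and slices of the quadric by subspaces that are not totally isotropic are
small. Using the worst case at every step loses too much, so the last steps are treated together.
For `d ≥ 6` every hyperplane section has at most `(q + 1) q ^ (d - 4)` points, and averaging over
the pencil of hyperplanes through a subspace of codimension two shows that this subspace contains
few points as well. For `d = 4, 5` the bad triples are those with orthogonal points: a second moment
estimate bounds the number of orthogonal pairs, and Goodman's inequality for triangles then shows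
that many triples are pairwise non-orthogonal, hence span a slice with few points.
-/

namespace AffineQuadric

open Finset Module
open LinearMap (BilinForm ker)
open scoped Classical

section Slices

variable {F V : Type*} [Field F] [AddCommGroup V] [Module F V]

/-- A finite set `K` of points of the quadric `B v v = 0` in homogeneous coordinates, normalised so
that the linear form `σ` takes the value `1` on `K`. The vectors in `ker σ` are the directions. -/
structure IsQuadricPoints (σ : Dual F V) (B : BilinForm F V) (K : Finset V) : Prop where
  symm : B.IsSymm
  height : ∀ p ∈ K, σ p = 1
  isotropic : ∀ p ∈ K, B p p = 0

/-- A subspace on which the bilinear form `B` vanishes identically; for symmetric `B` these are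
the linear spaces contained in the quadric of `B`. -/
def IsTotallyIsotropic (B : BilinForm F V) (S : Submodule F V) : Prop :=
  ∀ u ∈ S, ∀ v ∈ S, B u v = 0

/-- The number of points of `K` in the subspace `S`. For homogeneous coordinates `K` this is the
size of the corresponding affine slice, whose dimension is one less than that of `S`. -/
noncomputable def sliceCard (K : Finset V) (S : Submodule F V) : ℕ :=
  #{p ∈ K | p ∈ S}

lemma sliceCard_mono (K : Finset V) {S T : Submodule F V} (h : S ≤ T) :
    sliceCard K S ≤ sliceCard K T :=
  card_le_card (monotone_filter_right _ fun _ _ hp => h hp)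

lemma sliceCard_add_card_filter_notMem (K : Finset V) (S : Submodule F V) :
    sliceCard K S + #{p ∈ K | p ∉ S} = #K :=
  card_filter_add_card_filter_not _

variable {σ : Dual F V} {B : BilinForm F V} {K : Finset V} {S : Submodule F V} {m : ℕ}

lemma sliceCard_inf_ker_add_card_ne_zero (K : Finset V) (S : Submodule F V) (φ : Dual F V) :
    sliceCard K (S ⊓ ker φ) + #{p ∈ K | p ∈ S ∧ φ p ≠ 0} = sliceCard K S := by
  simpa only [sliceCard, filter_filter, Submodule.mem_inf, LinearMap.mem_ker] using
    card_filter_add_card_filter_not (s := {p ∈ K | p ∈ S}) (fun p => φ p = 0)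

lemma exists_mem_apply_ne_zero (hB : B.IsSymm) {v : V} (hv : v ∉ B.orthogonal S) :
    ∃ u ∈ S, B v u ≠ 0 := by
  by_contra! hall
  exact hv fun u hu => (hB.eq u v).trans (hall u hu)

lemma IsTotallyIsotropic.mono {T : Submodule F V} (hT : IsTotallyIsotropic B T) (h : S ≤ T) :
    IsTotallyIsotropic B S :=
  fun u hu v hv => hT u (h hu) v (h hv)

lemma isTotallyIsotropic_inf_orthogonal (B : BilinForm F V) (S : Submodule F V) :
    IsTotallyIsotropic B (S ⊓ B.orthogonal S) :=
  fun _ hu _ hv => hv.2 _ hu.1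

lemma isTotallyIsotropic_span (hB : B.IsSymm) {s : Set V} (hs : ∀ u ∈ s, ∀ v ∈ s, B u v = 0) :
    IsTotallyIsotropic B (Submodule.span F s) := by
  have hle : ∀ u ∈ s, Submodule.span F s ≤ ker (B u) := fun u hu =>
    Submodule.span_le.2 fun v hv => hs u hu v hv
  intro u hu v hv
  have hle' : Submodule.span F s ≤ ker (B v) :=
    Submodule.span_le.2 fun w hw => (hB.eq w v).symm.trans (hle w hw hv)
  exact (hB.eq v u).symm.trans (hle' hu)

lemma IsTotallyIsotropic.sup_span_singleton (hS : IsTotallyIsotropic B S) (hB : B.IsSymm) {p : V}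
    (hSp : ∀ u ∈ S, B u p = 0) (hp : B p p = 0) :
    IsTotallyIsotropic B (S ⊔ Submodule.span F {p}) := by
  rw [← Submodule.span_eq S, ← Submodule.span_union]
  refine isTotallyIsotropic_span hB ?_
  rintro u (hu | rfl) v (hv | rfl)
  · exact hS u hu v hv
  · exact hSp u hu
  · exact (hB.eq v u).symm.trans (hSp v hv)
  · exact hp

lemma finrank_inf_ker_lt [FiniteDimensional F V] {φ : Dual F V} {v : V} (hv : v ∈ S)
    (hφ : φ v ≠ 0) : finrank F ↥(S ⊓ ker φ) < finrank F S :=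
  Submodule.finrank_lt_finrank_of_lt <|
    inf_le_left.lt_of_not_ge fun h => hφ (h hv).2

lemma two_mul_finrank_le_of_isTotallyIsotropic [FiniteDimensional F V] (hB : B.IsSymm)
    (hS : IsTotallyIsotropic B S) :
    2 * finrank F S ≤ finrank F V + finrank F (ker B) := by
  have hle : finrank F S ≤ finrank F (B.orthogonal S) :=
    Submodule.finrank_mono fun v hv u hu => hS u hu v hv
  have hadd := LinearMap.BilinForm.finrank_add_finrank_orthogonal hB.isRefl S
  have hker : finrank F ↥(S ⊓ B.orthogonal ⊤) ≤ finrank F (ker B) := by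
    rw [LinearMap.BilinForm.orthogonal_top_eq_ker hB.isRefl]
    exact Submodule.finrank_mono inf_le_right
  omega

/- A line through a point `p` of the quadric with direction `v`, where `B p v = 1`, meets the
quadric only in `p` and in `p - (2 / B v v) • v`. -/
lemma IsQuadricPoints.injOn_inv_smul_sub (h : IsQuadricPoints σ B K) (h2 : (2 : F) ≠ 0) {p : V}
    (hp : p ∈ K) : Set.InjOn (fun r => (B p r)⁻¹ • (r - p)) {r | r ∈ K ∧ B p r ≠ 0} := by
  have hself : ∀ r ∈ K, B p r ≠ 0 →
      B ((B p r)⁻¹ • (r - p)) ((B p r)⁻¹ • (r - p)) * B p r = -2 := by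
    intro r hr hpr
    have hrp : B r p = B p r := h.symm.eq r p
    simp only [map_sub, map_smul, LinearMap.sub_apply, LinearMap.smul_apply, smul_eq_mul,
      h.isotropic r hr, h.isotropic p hp, hrp]
    field_simp
    ring
  rintro r ⟨hrK, hr⟩ r' ⟨hrK', hr'⟩ (heq : (B p r)⁻¹ • (r - p) = (B p r')⁻¹ • (r' - p))
  have hpair : B p r = B p r' := by
    have hself' := hself r' hrK' hr'
    rw [← heq, ← hself r hrK hr] at hself'
    refine (mul_left_cancel₀ (fun h0 => neg_ne_zero.2 h2 ?_) hself').symm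
    rw [← hself r hrK hr, h0, zero_mul]
  rw [hpair] at heq
  exact sub_left_injective (smul_right_injective V (inv_ne_zero hr') heq)

variable [Fintype F]

lemma card_le_pow_of_mapsTo [FiniteDimensional F V] {ι : Type*} {s : Finset ι} {f : ι → V}
    (hS : finrank F S ≤ m) (hf : ∀ i ∈ s, f i ∈ S) (hinj : Set.InjOn f s) :
    #s ≤ Fintype.card F ^ m := by
  have : Finite V := Module.finite_of_finite F
  have : Fintype V := Fintype.ofFinite V
  have hcard : #s ≤ #{v | v ∈ S} :=
    card_le_card_of_injOn f (fun i hi => by simpa using hf i hi) hinj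
  rw [← Fintype.card_subtype] at hcard
  calc #s ≤ Fintype.card S := hcard
    _ = Fintype.card F ^ finrank F S := Module.card_eq_pow_finrank
    _ ≤ Fintype.card F ^ m := Nat.pow_le_pow_right Fintype.card_pos hS

variable [FiniteDimensional F V]

lemma IsQuadricPoints.sliceCard_le_pow (h : IsQuadricPoints σ B K) (hS : finrank F S ≤ m + 1) :
    sliceCard K S ≤ Fintype.card F ^ m := by
  obtain hempty | ⟨p, hp⟩ := ({p ∈ K | p ∈ S}).eq_empty_or_nonempty
  · simp [sliceCard, hempty]
  obtain ⟨hpK, hpS⟩ := mem_filter.1 hp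
  have hlt := finrank_inf_ker_lt (φ := σ) hpS (by simp [h.height p hpK])
  refine card_le_pow_of_mapsTo (S := S ⊓ ker σ) (f := fun r => r - p) (by omega) ?_
    (fun r _ r' _ => sub_left_injective.eq_iff.1)
  intro r hr
  obtain ⟨hrK, hrS⟩ := mem_filter.1 hr
  exact ⟨S.sub_mem hrS hpS, by simp [h.height r hrK, h.height p hpK]⟩

lemma IsQuadricPoints.card_nonorthogonal_le (h : IsQuadricPoints σ B K) (h2 : (2 : F) ≠ 0)
    (hS : finrank F S ≤ m + 2) {p : V} (hpK : p ∈ K) (hpS : p ∈ S) :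
    #{r ∈ K | r ∈ S ∧ B p r ≠ 0} ≤ Fintype.card F ^ m := by
  obtain hempty | ⟨r₀, hr₀⟩ := ({r ∈ K | r ∈ S ∧ B p r ≠ 0}).eq_empty_or_nonempty
  · simp [hempty]
  obtain ⟨hr₀K, hr₀S, hr₀⟩ := mem_filter.1 hr₀
  let f : V → V := fun r => (B p r)⁻¹ • (r - p)
  have hf : ∀ r ∈ K, r ∈ S → B p r ≠ 0 → f r ∈ S ∧ B p (f r) = 1 ∧ σ (f r) = 0 :=
    fun r hrK hrS hr => ⟨S.smul_mem _ (S.sub_mem hrS hpS),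
      by simp [f, h.isotropic p hpK, hr], by simp [f, h.height r hrK, h.height p hpK]⟩
  obtain ⟨hfS₀, hfB₀, hfσ₀⟩ := hf r₀ hr₀K hr₀S hr₀
  have hlt := finrank_inf_ker_lt hr₀S hr₀
  have hlt' := finrank_inf_ker_lt (S := S ⊓ ker (B p)) (φ := σ) ⟨hpS, h.isotropic p hpK⟩
    (by simp [h.height p hpK])
  refine card_le_pow_of_mapsTo (S := S ⊓ ker (B p) ⊓ ker σ) (f := fun r => f r - f r₀)
    (by omega) ?_ ?_
  · intro r hr
    obtain ⟨hrK, hrS, hr⟩ := mem_filter.1 hr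
    obtain ⟨hfS, hfB, hfσ⟩ := hf r hrK hrS hr
    exact ⟨⟨S.sub_mem hfS hfS₀, by simp [hfB, hfB₀]⟩, by simp [hfσ, hfσ₀]⟩
  · intro r hr r' hr' heq
    have hmem := (mem_filter.1 (mem_coe.1 hr))
    have hmem' := (mem_filter.1 (mem_coe.1 hr'))
    exact h.injOn_inv_smul_sub h2 hpK ⟨hmem.1, hmem.2.2⟩ ⟨hmem'.1, hmem'.2.2⟩
      (sub_left_injective heq)

lemma IsQuadricPoints.sliceCard_le_two_mul_pow (h : IsQuadricPoints σ B K) (h2 : (2 : F) ≠ 0)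
    (hS : finrank F S ≤ m + 2) (hiso : ¬ IsTotallyIsotropic B S) :
    sliceCard K S ≤ 2 * Fintype.card F ^ m := by
  by_cases hrad : ∀ p ∈ K, p ∈ S → p ∈ S ⊓ B.orthogonal S
  · have hlt : S ⊓ B.orthogonal S < S := inf_le_left.lt_of_not_ge fun hle =>
      hiso ((isTotallyIsotropic_inf_orthogonal B S).mono hle)
    have hrank := Submodule.finrank_lt_finrank_of_lt hlt
    calc sliceCard K S ≤ sliceCard K (S ⊓ B.orthogonal S) :=
          card_le_card fun p hp => mem_filter.2 ⟨(mem_filter.1 hp).1,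
            hrad p (mem_filter.1 hp).1 (mem_filter.1 hp).2⟩
      _ ≤ Fintype.card F ^ m := h.sliceCard_le_pow (by omega)
      _ ≤ 2 * Fintype.card F ^ m := by omega
  push Not at hrad
  obtain ⟨p, hpK, hpS, hp⟩ := hrad
  obtain ⟨v, hvS, hv⟩ := exists_mem_apply_ne_zero h.symm fun hrad => hp ⟨hpS, hrad⟩
  have hlt := finrank_inf_ker_lt hvS hv
  calc sliceCard K S
      = sliceCard K (S ⊓ ker (B p)) + #{r ∈ K | r ∈ S ∧ B p r ≠ 0} :=
        (sliceCard_inf_ker_add_card_ne_zero K S (B p)).symm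
    _ ≤ Fintype.card F ^ m + Fintype.card F ^ m :=
        add_le_add (h.sliceCard_le_pow (by omega)) (h.card_nonorthogonal_le h2 hS hpK hpS)
    _ = 2 * Fintype.card F ^ m := (two_mul _).symm

end Slices

section HyperplaneSlices

variable {F V : Type*} [Field F] [AddCommGroup V] [Module F V] {σ : Dual F V} {B : BilinForm F V}
  {K : Finset V} {S : Submodule F V} {m : ℕ}
variable [Fintype F] [FiniteDimensional F V]

/- Moving a point along the isotropic direction `e` leaves the quadric, so the translates by `F • e`
of the points counted here are pairwise disjoint. -/
lemma IsQuadricPoints.card_eq_pairing_le (h : IsQuadricPoints σ B K) (h2 : (2 : F) ≠ 0) {e : V}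
    (heS : e ∈ S) (heσ : σ e = 0) (he : B e e = 0)
    (hS : finrank F ↥(S ⊓ ker σ ⊓ ker (B e)) ≤ m + 1) {c : F} (hc : c ≠ 0) :
    #{p ∈ K | p ∈ S ∧ B e p = c} ≤ Fintype.card F ^ m := by
  obtain hempty | ⟨r, hr⟩ := ({p ∈ K | p ∈ S ∧ B e p = c}).eq_empty_or_nonempty
  · simp [hempty]
  obtain ⟨hrK, hrS, hr⟩ := mem_filter.1 hr
  have hprod : #({p ∈ K | p ∈ S ∧ B e p = c} ×ˢ (univ : Finset F)) ≤ Fintype.card F ^ (m + 1) := by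
    refine card_le_pow_of_mapsTo (f := fun x => x.1 - r + x.2 • e) hS ?_ ?_
    · rintro ⟨p, a⟩ hp
      obtain ⟨hpK, hpS, hp⟩ := mem_filter.1 (mem_product.1 hp).1
      exact ⟨⟨S.add_mem (S.sub_mem hpS hrS) (S.smul_mem a heS),
        by simp [h.height p hpK, h.height r hrK, heσ]⟩, by simp [hp, hr, he]⟩
    · rintro ⟨p, a⟩ hp ⟨p', a'⟩ hp' (heq : p - r + a • e = p' - r + a' • e)
      obtain ⟨hpK, -, hp⟩ := mem_filter.1 (mem_product.1 (mem_coe.1 hp)).1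
      obtain ⟨hpK', -, hp'⟩ := mem_filter.1 (mem_product.1 (mem_coe.1 hp')).1
      obtain rfl : p = p' + (a' - a) • e := by
        rw [← sub_eq_zero]
        calc p - (p' + (a' - a) • e) = (p - r + a • e) - (p' - r + a' • e) := by module
          _ = 0 := sub_eq_zero.2 heq
      have hiso : 2 * ((a' - a) * c) = 0 := by
        have := h.isotropic _ hpK
        simp only [map_add, map_smul, LinearMap.add_apply, LinearMap.smul_apply, smul_eq_mul,
          h.isotropic p' hpK', h.symm.eq p' e, he, hp'] at this
        linear_combination this
      have haa : a' - a = 0 := by simpa [h2, hc] using hiso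
      simp [sub_eq_zero.1 haa]
  rw [card_product, card_univ, pow_succ] at hprod
  exact Nat.le_of_mul_le_mul_right hprod Fintype.card_pos

lemma IsQuadricPoints.card_pairing_ne_zero_le (h : IsQuadricPoints σ B K) (h2 : (2 : F) ≠ 0)
    {e : V} (heS : e ∈ S) (heσ : σ e = 0) (he : B e e = 0)
    (hS : finrank F ↥(S ⊓ ker σ ⊓ ker (B e)) ≤ m + 1) :
    #{p ∈ K | p ∈ S ∧ B e p ≠ 0} ≤ Fintype.card F ^ m * (Fintype.card F - 1) := by
  rw [← card_univ (α := F), ← card_erase_of_mem (mem_univ 0), card_univ]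
  refine card_le_mul_card_image_of_maps_to (f := B e) (fun p hp => ?_) _ fun c hc => ?_
  · exact mem_erase.2 ⟨(mem_filter.1 hp).2.2, mem_univ _⟩
  · refine (card_le_card fun p hp => ?_).trans
      (h.card_eq_pairing_le h2 heS heσ he hS (ne_of_mem_erase hc))
    obtain ⟨hp, hpc⟩ := mem_filter.1 hp
    exact mem_filter.2 ⟨(mem_filter.1 hp).1, (mem_filter.1 hp).2.1, hpc⟩

lemma IsQuadricPoints.sliceCard_le_pow_of_direction_orthogonal (h : IsQuadricPoints σ B K)
    (h2 : (2 : F) ≠ 0) (hS : finrank F S ≤ m + 2) {e : V} (heS : e ∈ S) (heσ : σ e = 0)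
    (he : B e e = 0) (herad : e ∉ B.orthogonal S) (hperp : ∀ u ∈ S, σ u = 0 → B e u = 0) :
    sliceCard K S ≤ Fintype.card F ^ m := by
  obtain hempty | ⟨p, hp⟩ := ({p ∈ K | p ∈ S}).eq_empty_or_nonempty
  · simp [sliceCard, hempty]
  obtain ⟨hpK, hpS⟩ := mem_filter.1 hp
  obtain ⟨v, hvS, hv⟩ := exists_mem_apply_ne_zero h.symm herad
  have hpe : B e p ≠ 0 := fun h0 => hv <| by
    simpa [h0] using hperp (v - σ v • p) (S.sub_mem hvS (S.smul_mem _ hpS))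
      (by simp [h.height p hpK])
  have hconst : ∀ r ∈ K, r ∈ S → B e r = B e p := fun r hrK hr => by
    simpa [sub_eq_zero] using
      hperp (r - p) (S.sub_mem hr hpS) (by simp [h.height r hrK, h.height p hpK])
  have hker := finrank_inf_ker_lt (φ := σ) hpS (by simp [h.height p hpK])
  calc sliceCard K S ≤ #{r ∈ K | r ∈ S ∧ B e r = B e p} :=
        card_le_card fun r hr => by
          obtain ⟨hrK, hrS⟩ := mem_filter.1 hr
          exact mem_filter.2 ⟨hrK, hrS, hconst r hrK hrS⟩
    _ ≤ Fintype.card F ^ m := h.card_eq_pairing_le h2 heS heσ he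
        ((Submodule.finrank_mono inf_le_left).trans (by omega)) hpe

lemma IsQuadricPoints.sliceCard_le_of_isotropic_direction (h : IsQuadricPoints σ B K)
    (h2 : (2 : F) ≠ 0) (hS : finrank F S ≤ m + 3)
    (hiso : ∀ T ≤ S, IsTotallyIsotropic B T → finrank F T ≤ m + 1)
    {e : V} (heS : e ∈ S) (heσ : σ e = 0) (he : B e e = 0) (herad : e ∉ B.orthogonal S) :
    sliceCard K S ≤ (Fintype.card F + 1) * Fintype.card F ^ m := by
  obtain hempty | ⟨p, hp⟩ := ({p ∈ K | p ∈ S}).eq_empty_or_nonempty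
  · simp [sliceCard, hempty]
  obtain ⟨hpK, hpS⟩ := mem_filter.1 hp
  have hσS := finrank_inf_ker_lt (φ := σ) hpS (by simp [h.height p hpK])
  by_cases hperp : ∀ u ∈ S, σ u = 0 → B e u = 0
  · calc sliceCard K S ≤ Fintype.card F ^ (m + 1) :=
          h.sliceCard_le_pow_of_direction_orthogonal h2 hS heS heσ he herad hperp
      _ ≤ (Fintype.card F + 1) * Fintype.card F ^ m := by rw [pow_succ']; gcongr; omega
  push Not at hperp
  obtain ⟨u, huS, hσu, hu⟩ := hperp
  have hσeS := finrank_inf_ker_lt (S := S ⊓ ker σ) (φ := B e) ⟨huS, hσu⟩ hu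
  have heS' := finrank_inf_ker_lt huS hu
  have hzero : sliceCard K (S ⊓ ker (B e)) ≤ 2 * Fintype.card F ^ m := by
    by_cases hT : IsTotallyIsotropic B (S ⊓ ker (B e))
    · exact (h.sliceCard_le_pow (hiso _ inf_le_left hT)).trans (by omega)
    · exact h.sliceCard_le_two_mul_pow h2 (by omega) hT
  calc sliceCard K S = _ := (sliceCard_inf_ker_add_card_ne_zero K S (B e)).symm
    _ ≤ 2 * Fintype.card F ^ m + Fintype.card F ^ m * (Fintype.card F - 1) :=
        add_le_add hzero (h.card_pairing_ne_zero_le h2 heS heσ he (by omega))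
    _ = (Fintype.card F + 1) * Fintype.card F ^ m := by
        obtain ⟨r, hr⟩ := Nat.exists_eq_add_one.2 (Fintype.card_pos (α := F))
        rw [hr, Nat.add_sub_cancel]
        ring

/- If every isotropic direction of `S` is radical, then the points of `S` orthogonal to a
nonradical point `p` differ from `p` by radical directions. -/
lemma IsQuadricPoints.sliceCard_le_of_directions_le_orthogonal (h : IsQuadricPoints σ B K)
    (h2 : (2 : F) ≠ 0) (hS : finrank F S ≤ m + 3)
    (hiso : ∀ T ≤ S, IsTotallyIsotropic B T → finrank F T ≤ m + 1)
    (hdir : ∀ e ∈ S, σ e = 0 → B e e = 0 → e ∈ B.orthogonal S)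
    {p : V} (hpK : p ∈ K) (hpS : p ∈ S) :
    sliceCard K S ≤ (Fintype.card F + 1) * Fintype.card F ^ m := by
  have hpσ : p ∉ S ⊓ B.orthogonal S ⊓ ker σ := fun hp => by
    simpa [h.height p hpK] using hp.2
  have hrank := Submodule.finrank_sup_span_singleton hpσ
  have hrank' := hiso (S ⊓ B.orthogonal S ⊓ ker σ ⊔ Submodule.span F {p})
    (sup_le (inf_le_left.trans inf_le_left)
    ((Submodule.span_singleton_le_iff_mem _ _).2 hpS))
    (((isTotallyIsotropic_inf_orthogonal B S).mono inf_le_left).sup_span_singleton h.symm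
      (fun u hu => (h.symm.eq p u).symm.trans (hu.1.2 p hpS)) (h.isotropic p hpK))
  have hperp : sliceCard K (S ⊓ ker (B p)) ≤ Fintype.card F ^ m := by
    refine card_le_pow_of_mapsTo (S := S ⊓ B.orthogonal S ⊓ ker σ) (f := fun r => r - p)
      (by omega) (fun r hr => ?_) (fun r _ r' _ => sub_left_injective.eq_iff.1)
    obtain ⟨hrK, hrS, hr⟩ := mem_filter.1 hr
    have hσ : σ (r - p) = 0 := by simp [h.height r hrK, h.height p hpK]
    have hB : B (r - p) (r - p) = 0 := by
      simp [h.isotropic r hrK, h.isotropic p hpK, h.symm.eq r p, LinearMap.mem_ker.1 hr]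
    exact ⟨⟨S.sub_mem hrS hpS, hdir _ (S.sub_mem hrS hpS) hσ hB⟩, hσ⟩
  calc sliceCard K S = _ := (sliceCard_inf_ker_add_card_ne_zero K S (B p)).symm
    _ ≤ Fintype.card F ^ m + Fintype.card F ^ (m + 1) :=
        add_le_add hperp (h.card_nonorthogonal_le h2 hS hpK hpS)
    _ = (Fintype.card F + 1) * Fintype.card F ^ m := by ring

lemma IsQuadricPoints.sliceCard_le_card_add_one_mul_pow (h : IsQuadricPoints σ B K)
    (h2 : (2 : F) ≠ 0) (hS : finrank F S ≤ m + 3)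
    (hiso : ∀ T ≤ S, IsTotallyIsotropic B T → finrank F T ≤ m + 1) :
    sliceCard K S ≤ (Fintype.card F + 1) * Fintype.card F ^ m := by
  obtain hempty | ⟨p, hp⟩ := ({p ∈ K | p ∈ S}).eq_empty_or_nonempty
  · simp [sliceCard, hempty]
  obtain ⟨hpK, hpS⟩ := mem_filter.1 hp
  by_cases hdir : ∀ e ∈ S, σ e = 0 → B e e = 0 → e ∈ B.orthogonal S
  · exact h.sliceCard_le_of_directions_le_orthogonal h2 hS hiso hdir hpK hpS
  push Not at hdir
  obtain ⟨e, heS, heσ, he, herad⟩ := hdir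
  exact h.sliceCard_le_of_isotropic_direction h2 hS hiso heS heσ he herad

end HyperplaneSlices

section OrthogonalPoints

variable {F V : Type*} [Field F] [AddCommGroup V] [Module F V] {σ : Dual F V} {B : BilinForm F V}
  {K : Finset V} {S : Submodule F V} {m : ℕ}

lemma IsTotallyIsotropic.mem_or_mem [FiniteDimensional F V] {T : Submodule F V}
    (hT : IsTotallyIsotropic B T) (hB : B.IsSymm) (h2 : (2 : F) ≠ 0) (hTS : T ≤ S)
    (hcodim : finrank F S ≤ finrank F T + 1) {p r : V} (hpS : p ∈ S) (hrS : r ∈ S)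
    (hp : B p p = 0) (hr : B r r = 0) (hpr : B p r ≠ 0) : p ∈ T ∨ r ∈ T := by
  refine or_iff_not_imp_left.2 fun hpT => ?_
  have hsup : T ⊔ Submodule.span F {p} = S := by
    refine Submodule.eq_of_le_of_finrank_le
      (sup_le hTS ((Submodule.span_singleton_le_iff_mem _ _).2 hpS)) ?_
    have := Submodule.finrank_sup_span_singleton hpT
    omega
  obtain ⟨u, huT, w, hw, rfl⟩ := Submodule.mem_sup.1 (hsup ▸ hrS)
  obtain ⟨c, rfl⟩ := Submodule.mem_span_singleton.1 hw
  have huu : B u u = 0 := hT u huT u huT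
  have hup : B u p = B p u := hB.eq u p
  simp only [map_add, map_smul, LinearMap.add_apply, LinearMap.smul_apply, smul_eq_mul, hp, huu,
    hup] at hr hpr
  have hc : 2 * c * B p u = 0 := by linear_combination hr
  have hc0 : c = 0 := by simpa [h2, show B p u ≠ 0 by simpa using hpr] using hc
  simpa [hc0] using huT

lemma IsTotallyIsotropic.finrank_add_two_le [FiniteDimensional F V] {T : Submodule F V}
    (hT : IsTotallyIsotropic B T) (hB : B.IsSymm) (h2 : (2 : F) ≠ 0) (hTS : T ≤ S) {p r s : V}
    (hpS : p ∈ S) (hrS : r ∈ S) (hsS : s ∈ S) (hp : B p p = 0) (hr : B r r = 0) (hs : B s s = 0)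
    (hpr : B p r ≠ 0) (hps : B p s ≠ 0) (hrs : B r s ≠ 0) : finrank F T + 2 ≤ finrank F S := by
  by_contra! hcodim
  have hcodim' : finrank F S ≤ finrank F T + 1 := by omega
  obtain hpT | hrT := hT.mem_or_mem hB h2 hTS hcodim' hpS hrS hp hr hpr
  · obtain hrT | hsT := hT.mem_or_mem hB h2 hTS hcodim' hrS hsS hr hs hrs
    · exact hpr (hT p hpT r hrT)
    · exact hps (hT p hpT s hsT)
  · obtain hpT | hsT := hT.mem_or_mem hB h2 hTS hcodim' hpS hsS hp hs hps
    · exact hpr (hT p hpT r hrT)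
    · exact hrs (hT r hrT s hsT)

/-- The ordered pairs of distinct orthogonal points of `K`; when `K` consists of points of the
quadric of `B`, these are the pairs whose joining line lies on the quadric. -/
noncomputable def orthogonalPairs (B : BilinForm F V) (K : Finset V) : Finset (V × V) :=
  {x ∈ K.offDiag | B x.1 x.2 = 0}

lemma IsQuadricPoints.card_orthogonalPairs_add_card (h : IsQuadricPoints σ B K) :
    #(orthogonalPairs B K) + #K = ∑ v ∈ K, #{p ∈ K | B p v = 0} := by
  have hdiag : ∀ x ∈ K.diag, B x.1 x.2 = 0 := fun x hx => by
    obtain ⟨hxK, hx⟩ := mem_diag.1 hx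
    rw [← hx, h.isotropic _ hxK]
  calc #(orthogonalPairs B K) + #K
      = #{x ∈ K ×ˢ K | B x.1 x.2 = 0} := by
        rw [← diag_union_offDiag, filter_union, card_union_of_disjoint
          (disjoint_filter_filter (disjoint_diag_offDiag K)), filter_true_of_mem hdiag, diag_card,
          add_comm, orthogonalPairs]
    _ = ∑ v ∈ K, #{p ∈ K | B p v = 0} := by
        simp_rw [card_filter]
        rw [sum_product_right]

lemma finrank_ker_inf_ker_le [FiniteDimensional F V] {f g : Dual F V} {n : ℕ}
    (hV : finrank F V = n + 2) (hf : f ≠ 0) (hg : g ∉ Submodule.span F {f}) :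
    finrank F ↥(ker f ⊓ ker g) ≤ n := by
  have hker := Module.Dual.finrank_ker_add_one_of_ne_zero hf
  obtain ⟨v, hfv, hgv⟩ : ∃ v ∈ ker f, g v ≠ 0 := by
    by_contra! hle
    refine hg ?_
    simpa using mem_span_of_iInf_ker_le_ker (L := fun _ : Unit => f)
      (by simpa using (show ker f ≤ ker g from hle))
  have hlt := finrank_inf_ker_lt hfv hgv
  omega

end OrthogonalPoints

section Mixing

variable {F V : Type*} [Field F] [AddCommGroup V] [Module F V] [Fintype F] [Fintype V]

lemma card_filter_mem_submodule (S : Submodule F V) :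
    #{v | v ∈ S} = Fintype.card F ^ finrank F S := by
  rw [← Fintype.card_subtype]
  exact Module.card_eq_pow_finrank

variable {ι : Type*} {s : Finset ι} {φ : ι → Dual F V} {n : ℕ}

lemma card_ker_inf_ker_le {f g : Dual F V} (hV : finrank F V = n + 2) (hf : f ≠ 0)
    (hg : g ∉ Submodule.span F {f}) : #{v | f v = 0 ∧ g v = 0} ≤ Fintype.card F ^ n :=
  calc #{v | f v = 0 ∧ g v = 0} = #{v | v ∈ ker f ⊓ ker g} := by simp
    _ = Fintype.card F ^ finrank F ↥(ker f ⊓ ker g) := card_filter_mem_submodule _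
    _ ≤ Fintype.card F ^ n :=
      Nat.pow_le_pow_right Fintype.card_pos (finrank_ker_inf_ker_le hV hf hg)

lemma card_ker_eq {f : Dual F V} (hV : finrank F V = n + 1) (hf : f ≠ 0) :
    #{v | f v = 0} = Fintype.card F ^ n := by
  have hker := Module.Dual.finrank_ker_add_one_of_ne_zero hf
  calc #{v | f v = 0} = #{v | v ∈ ker f} := by simp
    _ = Fintype.card F ^ n := by rw [card_filter_mem_submodule]; congr 1; omega

lemma sum_card_filter_apply_eq_zero (hV : finrank F V = n + 1) (hφ : ∀ i ∈ s, φ i ≠ 0) :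
    ∑ v, #{i ∈ s | φ i v = 0} = #s * Fintype.card F ^ n := by
  simp_rw [card_filter]
  rw [sum_comm]
  simp_rw [← card_filter]
  rw [sum_congr rfl fun i hi => card_ker_eq hV (hφ i hi), sum_const, smul_eq_mul]

lemma sum_card_filter_apply_eq_zero_sq_le (hV : finrank F V = n + 2) (hφ : ∀ i ∈ s, φ i ≠ 0)
    {μ : ℕ} (hμ : ∀ i ∈ s, #{j ∈ s | φ j ∈ Submodule.span F {φ i}} ≤ μ) :
    ∑ v, (#{i ∈ s | φ i v = 0} : ℝ) ^ 2 ≤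
      #s ^ 2 * Fintype.card F ^ n + #s * μ * (Fintype.card F ^ (n + 1) - Fintype.card F ^ n) := by
  have hpair : ∀ i ∈ s, ∀ j ∈ s, (#{v | φ i v = 0 ∧ φ j v = 0} : ℝ) ≤ Fintype.card F ^ n +
      if φ j ∈ Submodule.span F {φ i} then
        (Fintype.card F ^ (n + 1) - Fintype.card F ^ n : ℝ) else 0 := by
    intro i hi j _
    split_ifs with hij
    · have hle : #{v | φ i v = 0 ∧ φ j v = 0} ≤ Fintype.card F ^ (n + 1) :=
        (card_le_card (monotone_filter_right _ fun _ _ h => h.1)).trans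
          (card_ker_eq hV (hφ i hi)).le
      linarith [(by exact_mod_cast hle :
        (#{v | φ i v = 0 ∧ φ j v = 0} : ℝ) ≤ Fintype.card F ^ (n + 1))]
    · simpa using (by exact_mod_cast card_ker_inf_ker_le hV (hφ i hi) hij :
        (#{v | φ i v = 0 ∧ φ j v = 0} : ℝ) ≤ Fintype.card F ^ n)
  have hq : (Fintype.card F : ℝ) ^ n ≤ Fintype.card F ^ (n + 1) :=
    pow_le_pow_right₀ (by exact_mod_cast Fintype.card_pos) n.le_succ
  calc ∑ v, (#{i ∈ s | φ i v = 0} : ℝ) ^ 2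
      = ∑ i ∈ s, ∑ j ∈ s, (#{v | φ i v = 0 ∧ φ j v = 0} : ℝ) := by
        simp_rw [card_filter, Nat.cast_sum, Nat.cast_ite, Nat.cast_one, Nat.cast_zero, sq,
          sum_mul_sum, ite_and, ite_zero_mul_ite_zero, one_mul, ← ite_and]
        rw [sum_comm]
        exact sum_congr rfl fun i _ => sum_comm
    _ ≤ ∑ i ∈ s, (#s * Fintype.card F ^ n +
          #{j ∈ s | φ j ∈ Submodule.span F {φ i}} *
            (Fintype.card F ^ (n + 1) - Fintype.card F ^ n : ℝ)) := by
        refine sum_le_sum fun i hi => (sum_le_sum (hpair i hi)).trans_eq ?_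
        rw [sum_add_distrib, ← sum_filter, sum_const, sum_const, nsmul_eq_mul, nsmul_eq_mul]
    _ ≤ ∑ _i ∈ s, (#s * Fintype.card F ^ n +
          μ * (Fintype.card F ^ (n + 1) - Fintype.card F ^ n : ℝ)) := by
        refine sum_le_sum fun i hi => ?_
        have := hμ i hi
        gcongr
    _ = _ := by rw [sum_const, nsmul_eq_mul]; ring

lemma sum_card_filter_apply_eq_zero_sub_sq_le (hV : finrank F V = n + 2)
    (hφ : ∀ i ∈ s, φ i ≠ 0) {μ : ℕ}
    (hμ : ∀ i ∈ s, #{j ∈ s | φ j ∈ Submodule.span F {φ i}} ≤ μ) :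
    ∑ v, (#{i ∈ s | φ i v = 0} - #s / Fintype.card F : ℝ) ^ 2 ≤
      #s * μ * Fintype.card F ^ n * (Fintype.card F - 1) := by
  have hq : (Fintype.card F : ℝ) ≠ 0 := by exact_mod_cast Fintype.card_ne_zero
  have hcard : (Fintype.card V : ℝ) = Fintype.card F ^ (n + 2) := by
    rw [Module.card_eq_pow_finrank (K := F), hV, Nat.cast_pow]
  have hsum : ∑ v, (#{i ∈ s | φ i v = 0} : ℝ) = #s * Fintype.card F ^ (n + 1) := by
    exact_mod_cast sum_card_filter_apply_eq_zero hV hφ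
  have hsq := sum_card_filter_apply_eq_zero_sq_le hV hφ hμ
  calc ∑ v, (#{i ∈ s | φ i v = 0} - #s / Fintype.card F : ℝ) ^ 2
      = ∑ v, (#{i ∈ s | φ i v = 0} : ℝ) ^ 2 - #s ^ 2 * Fintype.card F ^ n := by
        simp_rw [sub_sq, sum_add_distrib, sum_sub_distrib]
        rw [← sum_mul, ← mul_sum, hsum, sum_const, card_univ, nsmul_eq_mul, hcard]
        field_simp
        ring
    _ ≤ #s * μ * (Fintype.card F ^ (n + 1) - Fintype.card F ^ n) := by linarith
    _ = #s * μ * Fintype.card F ^ n * (Fintype.card F - 1) := by ring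

lemma card_sub_one_mul_sum_le {σ : Dual F V} {K : Finset V} (hσ : ∀ p ∈ K, σ p = 1)
    {g : V → ℝ} (hg : ∀ v, 0 ≤ g v) (hsmul : ∀ a : F, a ≠ 0 → ∀ v, g (a • v) = g v) :
    (Fintype.card F - 1 : ℝ) * ∑ p ∈ K, g p ≤ ∑ v, g v := by
  have hinj : Set.InjOn (fun x : F × V => x.1 • x.2) ↑((univ.erase (0 : F)) ×ˢ K) := by
    rintro ⟨a, p⟩ hp ⟨b, r⟩ hr (heq : a • p = b • r)
    obtain ⟨ha, hp⟩ := mem_product.1 (mem_coe.1 hp)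
    have hab : a = b := by
      simpa [hσ p hp, hσ r (mem_product.1 (mem_coe.1 hr)).2] using congrArg σ heq
    subst hab
    rw [smul_right_injective V (ne_of_mem_erase ha) heq]
  calc (Fintype.card F - 1 : ℝ) * ∑ p ∈ K, g p
      = ∑ x ∈ (univ.erase (0 : F)) ×ˢ K, g (x.1 • x.2) := by
        rw [sum_product, sum_congr rfl fun a ha => sum_congr rfl fun p _ =>
          hsmul a (ne_of_mem_erase ha) p, sum_const, card_erase_of_mem (mem_univ _), card_univ,
          nsmul_eq_mul, Nat.cast_pred Fintype.card_pos]
    _ = ∑ v ∈ ((univ.erase (0 : F)) ×ˢ K).image fun x => x.1 • x.2, g v :=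
        (sum_image hinj).symm
    _ ≤ ∑ v, g v := sum_le_univ_sum_of_nonneg hg

end Mixing

section Pairs

variable {F V : Type*} [Field F] [AddCommGroup V] [Module F V]
  {σ : Dual F V} {B : BilinForm F V} {K : Finset V} {S : Submodule F V} {m n : ℕ}

lemma isTotallyIsotropic_ker (B : BilinForm F V) : IsTotallyIsotropic B (ker B) :=
  fun u hu v _ => by rw [LinearMap.mem_ker.1 hu, LinearMap.zero_apply]

lemma IsQuadricPoints.mono (h : IsQuadricPoints σ B K) {L : Finset V} (hLK : L ⊆ K) :
    IsQuadricPoints σ B L :=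
  ⟨h.symm, fun p hp => h.height p (hLK hp), fun p hp => h.isotropic p (hLK hp)⟩

/- The function `v ↦ #{p ∈ K | B p v = 0}` has small variance on `V`; being homogeneous, it also
has small variance on `K`, whose nonzero multiples are distinct. -/
lemma IsQuadricPoints.card_mul_card_orthogonalPairs_add_le [Fintype F]
    (h : IsQuadricPoints σ B K) (hV : finrank F V = n + 2) (hK : ∀ p ∈ K, B p ≠ 0) {μ : ℕ}
    (hμ : ∀ p ∈ K, #{r ∈ K | B r ∈ Submodule.span F {B p}} ≤ μ) {ρ : ℝ} (hρ : 0 ≤ ρ)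
    (hμρ : μ * Fintype.card F ^ n ≤ ρ ^ 2) :
    (Fintype.card F * (#(orthogonalPairs B K) + #K) : ℝ) ≤ #K ^ 2 + #K * Fintype.card F * ρ := by
  have : FiniteDimensional F V := Module.finite_of_finrank_pos (by omega)
  have : Finite V := Module.finite_of_finite F
  have : Fintype V := Fintype.ofFinite V
  have hq : (1 : ℝ) < Fintype.card F := by exact_mod_cast Fintype.one_lt_card
  let g : V → ℝ := fun v => #{p ∈ K | B p v = 0} - #K / Fintype.card F
  have hgK : ∑ v ∈ K, g v = #(orthogonalPairs B K) + #K - #K * (#K / Fintype.card F) := by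
    rw [sum_sub_distrib, sum_const, nsmul_eq_mul]
    exact_mod_cast congrArg (fun x : ℕ => (x : ℝ) - #K * (#K / Fintype.card F))
      h.card_orthogonalPairs_add_card.symm
  have hvar : (Fintype.card F - 1 : ℝ) * ∑ v ∈ K, g v ^ 2 ≤
      #K * μ * Fintype.card F ^ n * (Fintype.card F - 1) :=
    (card_sub_one_mul_sum_le h.height (fun v => sq_nonneg _) fun a ha v => by
      simp [g, ha]).trans (sum_card_filter_apply_eq_zero_sub_sq_le hV hK hμ)
  have hvarK : ∑ v ∈ K, g v ^ 2 ≤ #K * (μ * Fintype.card F ^ n) :=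
    le_of_mul_le_mul_left (by linarith) (sub_pos.2 hq)
  have hsq : (∑ v ∈ K, g v) ^ 2 ≤ (#K * ρ) ^ 2 :=
    calc (∑ v ∈ K, g v) ^ 2 ≤ #K * ∑ v ∈ K, g v ^ 2 := sq_sum_le_card_mul_sum_sq
      _ ≤ #K * (#K * ρ ^ 2) := by gcongr; exact hvarK.trans (by gcongr)
      _ = (#K * ρ) ^ 2 := by ring
  have hdev := (le_abs_self _).trans (abs_le_of_sq_le_sq hsq (by positivity))
  rw [hgK] at hdev
  calc (Fintype.card F * (#(orthogonalPairs B K) + #K) : ℝ)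
      ≤ Fintype.card F * (#K * ρ + #K * (#K / Fintype.card F)) :=
        mul_le_mul_of_nonneg_left (by linarith) (by positivity)
    _ = #K ^ 2 + #K * Fintype.card F * ρ := by field_simp; ring

lemma card_orthogonalPairs_le_erase (B : BilinForm F V) {a : V} (ha : a ∈ K) :
    #(orthogonalPairs B K) ≤ #(orthogonalPairs B (K.erase a)) + 2 * #(K.erase a) := by
  obtain ⟨L, haL, rfl⟩ : ∃ L, a ∉ L ∧ insert a L = K :=
    ⟨K.erase a, notMem_erase a K, insert_erase ha⟩
  rw [erase_insert haL, orthogonalPairs, offDiag_insert haL, filter_union, filter_union, two_mul,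
    ← add_assoc]
  refine (card_union_le _ _).trans
    (add_le_add ((card_union_le _ _).trans (add_le_add_right ?_ _)) ?_)
  · exact (card_filter_le _ _).trans (by simp)
  · exact (card_filter_le _ _).trans (by simp)

variable [FiniteDimensional F V]

lemma finrank_sup_span_singleton_le (S : Submodule F V) (v : V) :
    finrank F ↥(S ⊔ Submodule.span F {v}) ≤ finrank F S + 1 :=
  (Submodule.finrank_add_le_finrank_add_finrank _ _).trans <|
    Nat.add_le_add_left (by simpa using finrank_span_le_card ({v} : Set V)) _

/- Otherwise the quadric would contain a three-dimensional subspace of the four-dimensional `V`. -/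
lemma IsQuadricPoints.mem_ker_sup_span_of_finrank_eq_four (h : IsQuadricPoints σ B K)
    (hV : finrank F V = 4) (hker : finrank F (ker B) = 1) {p r : V} (hpK : p ∈ K) (hp : p ∉ ker B)
    (hrK : r ∈ K) (hrp : B r p = 0) : r ∈ ker B ⊔ Submodule.span F {p} := by
  by_contra hr
  have hline : IsTotallyIsotropic B (ker B ⊔ Submodule.span F {p}) :=
    (isTotallyIsotropic_ker B).sup_span_singleton h.symm
      (fun u hu => LinearMap.congr_fun (LinearMap.mem_ker.1 hu) p) (h.isotropic p hpK)
  have horth : ∀ u ∈ ker B ⊔ Submodule.span F {p}, B u r = 0 := by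
    have hle : ker B ⊔ Submodule.span F {p} ≤ ker (B r) :=
      sup_le
        (fun u hu => (h.symm.eq u r).symm.trans (LinearMap.congr_fun (LinearMap.mem_ker.1 hu) r))
        ((Submodule.span_singleton_le_iff_mem _ _).2 hrp)
    exact fun u hu => (h.symm.eq r u).symm.trans (hle hu)
  have hplane := two_mul_finrank_le_of_isTotallyIsotropic h.symm
    (hline.sup_span_singleton h.symm horth (h.isotropic r hrK))
  have := Submodule.finrank_sup_span_singleton hp
  have := Submodule.finrank_sup_span_singleton hr
  omega

lemma IsQuadricPoints.sliceCard_ker_le_one (h : IsQuadricPoints σ B K)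
    (hker : finrank F (ker B) ≤ 1) : sliceCard K (ker B) ≤ 1 := by
  refine card_le_one.2 fun a ha b hb => ?_
  obtain ⟨haK, ha⟩ := mem_filter.1 ha
  obtain ⟨hbK, hb⟩ := mem_filter.1 hb
  obtain ⟨v, hv⟩ := finrank_le_one_iff.1 hker
  obtain ⟨c, hc⟩ := hv ⟨a, ha⟩
  obtain ⟨c', hc'⟩ := hv ⟨b, hb⟩
  obtain rfl : c • v.1 = a := congrArg Subtype.val hc
  obtain rfl : c' • v.1 = b := congrArg Subtype.val hc'
  have hc1 : c * σ v = 1 := by simpa using h.height _ haK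
  have hc1' : c' * σ v = 1 := by simpa using h.height _ hbK
  rw [mul_right_cancel₀ (right_ne_zero_of_mul_eq_one hc1) (hc1.trans hc1'.symm)]

variable [Fintype F]

lemma IsQuadricPoints.card_filter_apply_mem_span_le (h : IsQuadricPoints σ B K)
    (hker : finrank F (ker B) ≤ m) (p : V) :
    #{r ∈ K | B r ∈ Submodule.span F {B p}} ≤ Fintype.card F ^ m := by
  have hcomap : (Submodule.span F {B p}).comap B = ker B ⊔ Submodule.span F {p} := by
    rw [← Set.image_singleton, ← Submodule.map_span, Submodule.comap_map_eq, sup_comm]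
  have hrank := finrank_sup_span_singleton_le (ker B) p
  exact h.sliceCard_le_pow (S := (Submodule.span F {B p}).comap B) (hcomap ▸ by omega)

lemma IsQuadricPoints.card_orthogonalPairs_add_card_le_of_finrank_eq_four
    (h : IsQuadricPoints σ B K) (hV : finrank F V = 4) (hker : finrank F (ker B) = 1) :
    #(orthogonalPairs B K) + #K ≤
      sliceCard K (ker B) * #K + #{p ∈ K | p ∉ ker B} * Fintype.card F := by
  have hline : ∀ p ∈ {p ∈ K | p ∉ ker B}, #{r ∈ K | B r p = 0} ≤ Fintype.card F := by
    intro p hp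
    obtain ⟨hpK, hp⟩ := mem_filter.1 hp
    have hrank := finrank_sup_span_singleton_le (ker B) p
    calc #{r ∈ K | B r p = 0} ≤ sliceCard K (ker B ⊔ Submodule.span F {p}) :=
          card_le_card fun r hr => mem_filter.2 ⟨(mem_filter.1 hr).1,
            h.mem_ker_sup_span_of_finrank_eq_four hV hker hpK hp (mem_filter.1 hr).1
              (mem_filter.1 hr).2⟩
      _ ≤ Fintype.card F ^ 1 := h.sliceCard_le_pow (by omega)
      _ = Fintype.card F := pow_one _
  rw [h.card_orthogonalPairs_add_card, ← sum_filter_add_sum_filter_not K (· ∈ ker B)]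
  exact add_le_add (sum_le_card_nsmul _ _ _ fun p _ => card_filter_le _ _)
    (sum_le_card_nsmul _ _ _ hline)

lemma IsQuadricPoints.card_mul_card_orthogonalPairs_le_of_finrank_eq_four
    (h : IsQuadricPoints σ B K) (hV : finrank F V = 4) (hker : finrank F (ker B) ≤ 1) :
    (Fintype.card F * #(orthogonalPairs B K) : ℝ) ≤
      #K ^ 2 + #K * Fintype.card F * (Fintype.card F - 1) := by
  obtain hker0 | hker1 : finrank F (ker B) = 0 ∨ finrank F (ker B) = 1 := by omega
  · have hK : ∀ p ∈ K, B p ≠ 0 := fun p hpK hp => by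
      have hp0 : p = 0 := by simpa [Submodule.finrank_eq_zero.1 hker0] using LinearMap.mem_ker.2 hp
      simpa [hp0] using h.height p hpK
    have hmix := h.card_mul_card_orthogonalPairs_add_le (n := 2) hV hK
      (fun p _ => h.card_filter_apply_mem_span_le hker0.le p) (Nat.cast_nonneg (Fintype.card F))
      (by simp)
    linarith
  · have hcount := h.card_orthogonalPairs_add_card_le_of_finrank_eq_four hV hker1
    have hsplit := sliceCard_add_card_filter_notMem K (ker B)
    have hq : (0 : ℝ) < Fintype.card F := by exact_mod_cast Fintype.card_pos
    obtain hker | hker : sliceCard K (ker B) = 0 ∨ sliceCard K (ker B) = 1 := by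
      have := h.sliceCard_ker_le_one hker
      omega
    · have hcount' : (#(orthogonalPairs B K) + #K : ℝ) ≤ #K * Fintype.card F := by
        exact_mod_cast (by simpa [hker, ← hsplit] using hcount)
      nlinarith
    · have hcount' : (#(orthogonalPairs B K) : ℝ) ≤ (#K - 1) * Fintype.card F := by
        rw [← hsplit, hker, Nat.cast_add, Nat.cast_one, add_sub_cancel_left]
        exact_mod_cast (by rw [hker] at hcount; omega)
      nlinarith [sq_nonneg (#K - Fintype.card F : ℝ), sq_nonneg (#K : ℝ)]

lemma IsQuadricPoints.card_mul_card_orthogonalPairs_add_le_of_disjoint_ker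
    (h : IsQuadricPoints σ B K) (hV : finrank F V = 5) (hker : finrank F (ker B) ≤ 1)
    (hK : ∀ p ∈ K, p ∉ ker B) :
    (Fintype.card F * (#(orthogonalPairs B K) + #K) : ℝ) ≤
      #K ^ 2 + #K * Fintype.card F ^ 3 := by
  have hmix := h.card_mul_card_orthogonalPairs_add_le (n := 3) hV hK
    (fun p _ => h.card_filter_apply_mem_span_le hker p) (sq_nonneg (Fintype.card F : ℝ))
    (by push_cast; exact le_of_eq (by ring))
  linarith

lemma IsQuadricPoints.card_mul_card_orthogonalPairs_le_of_finrank_eq_five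
    (h : IsQuadricPoints σ B K) (hV : finrank F V = 5) (hker : finrank F (ker B) ≤ 1) :
    (Fintype.card F * #(orthogonalPairs B K) : ℝ) ≤
      #K ^ 2 + #K * Fintype.card F ^ 3 + #K * Fintype.card F := by
  by_cases hK : ∀ p ∈ K, p ∉ ker B
  · have hmix := h.card_mul_card_orthogonalPairs_add_le_of_disjoint_ker hV hker hK
    have : (0 : ℝ) ≤ #K * Fintype.card F := by positivity
    linarith
  push Not at hK
  obtain ⟨a, haK, ha⟩ := hK
  have hunique : ∀ p ∈ K.erase a, p ∉ ker B := fun p hp hpker =>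
    ne_of_mem_erase hp <| card_le_one.1 (h.sliceCard_ker_le_one hker) p
      (mem_filter.2 ⟨mem_of_mem_erase hp, hpker⟩) a (mem_filter.2 ⟨haK, ha⟩)
  have hmix := (h.mono (erase_subset a K)).card_mul_card_orthogonalPairs_add_le_of_disjoint_ker
    hV hker hunique
  have hinsert : (#(orthogonalPairs B K) : ℝ) ≤
      #(orthogonalPairs B (K.erase a)) + 2 * #(K.erase a) := by
    exact_mod_cast card_orthogonalPairs_le_erase B haK
  have hle : (#(K.erase a) : ℝ) ≤ #K := by exact_mod_cast card_erase_le
  calc (Fintype.card F * #(orthogonalPairs B K) : ℝ)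
      ≤ Fintype.card F * (#(orthogonalPairs B (K.erase a)) + 2 * #(K.erase a)) := by gcongr
    _ ≤ #(K.erase a) ^ 2 + #(K.erase a) * Fintype.card F ^ 3 + #(K.erase a) * Fintype.card F := by
        linarith
    _ ≤ #K ^ 2 + #K * Fintype.card F ^ 3 + #K * Fintype.card F := by gcongr

lemma IsQuadricPoints.card_filter_orthogonalPairs_dependent_le (h : IsQuadricPoints σ B K)
    (hker : finrank F (ker B) ≤ 1) :
    #{x ∈ orthogonalPairs B K | B x.1 = 0 ∨ B x.2 ∈ Submodule.span F {B x.1}} ≤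
      #K * (Fintype.card F + 1) := by
  have hfiber : ∀ p ∈ K, #{r ∈ K | B p = 0 ∨ B r ∈ Submodule.span F {B p}} ≤
      Fintype.card F + if p ∈ ker B then #K else 0 := by
    intro p _
    split_ifs with hp
    · exact (card_filter_le _ _).trans (Nat.le_add_left _ _)
    · have hp0 : B p ≠ 0 := hp
      simpa [hp0] using h.card_filter_apply_mem_span_le hker p
  calc #{x ∈ orthogonalPairs B K | B x.1 = 0 ∨ B x.2 ∈ Submodule.span F {B x.1}}
      ≤ #{x ∈ K ×ˢ K | B x.1 = 0 ∨ B x.2 ∈ Submodule.span F {B x.1}} :=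
        card_le_card <| filter_subset_filter _ <|
          (filter_subset _ _).trans fun _ hx =>
            mem_product.2 ((mem_offDiag.1 hx).imp_right And.left)
    _ = ∑ p ∈ K, #{r ∈ K | B p = 0 ∨ B r ∈ Submodule.span F {B p}} := by
        simp_rw [card_filter]
        rw [sum_product]
    _ ≤ ∑ p ∈ K, (Fintype.card F + if p ∈ ker B then #K else 0) := sum_le_sum hfiber
    _ = #K * Fintype.card F + sliceCard K (ker B) * #K := by
        rw [sum_add_distrib, ← sum_filter, sum_const, sum_const, smul_eq_mul, smul_eq_mul,
          sliceCard]
    _ ≤ #K * Fintype.card F + 1 * #K := by gcongr; exact h.sliceCard_ker_le_one hker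
    _ = #K * (Fintype.card F + 1) := by ring

lemma IsQuadricPoints.sliceCard_ker_apply_le (h : IsQuadricPoints σ B K) (h2 : (2 : F) ≠ 0)
    (hV : finrank F V = m + 3) (hker : finrank F (ker B) < m + 1) {p : V} (hp : p ∉ ker B) :
    sliceCard K (ker (B p)) ≤ 2 * Fintype.card F ^ m := by
  have hrank := Module.Dual.finrank_ker_add_one_of_ne_zero (f := B p) hp
  refine h.sliceCard_le_two_mul_pow h2 (by omega) fun hiso => ?_
  have := two_mul_finrank_le_of_isTotallyIsotropic h.symm hiso
  omega

lemma IsQuadricPoints.sum_orthogonalPairs_card_le (h : IsQuadricPoints σ B K) (h2 : (2 : F) ≠ 0)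
    (hV : finrank F V = m + 3) (hker : finrank F (ker B) ≤ 1) (hm : 0 < m) :
    ∑ x ∈ orthogonalPairs B K, #{r ∈ K | B x.1 r = 0 ∧ B x.2 r = 0} ≤
      #(orthogonalPairs B K) * Fintype.card F ^ m +
        #K * (Fintype.card F + 1) * Fintype.card F ^ m := by
  have hcone : ∀ p ∉ ker B, #{r ∈ K | B p r = 0} ≤ 2 * Fintype.card F ^ m := fun p hp =>
    h.sliceCard_ker_apply_le h2 hV (by omega) hp
  have hthird : ∀ x ∈ orthogonalPairs B K, #{r ∈ K | B x.1 r = 0 ∧ B x.2 r = 0} ≤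
      Fintype.card F ^ m + if B x.1 = 0 ∨ B x.2 ∈ Submodule.span F {B x.1} then
        Fintype.card F ^ m else 0 := by
    intro x hx
    obtain ⟨hx1, hx2, hne⟩ := mem_offDiag.1 (mem_filter.1 hx).1
    split_ifs with hdep
    · rw [← two_mul]
      by_cases hker1 : x.1 ∈ ker B
      · have hker2 : x.2 ∉ ker B := fun hker2 => hne <|
          card_le_one.1 (h.sliceCard_ker_le_one hker) _ (mem_filter.2 ⟨hx1, hker1⟩) _
            (mem_filter.2 ⟨hx2, hker2⟩)
        exact (card_le_card (monotone_filter_right _ fun _ _ hr => hr.2)).trans (hcone _ hker2)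
      · exact (card_le_card (monotone_filter_right _ fun _ _ hr => hr.1)).trans (hcone _ hker1)
    · push Not at hdep
      have hrank := finrank_ker_inf_ker_le (n := m + 1) hV hdep.1 hdep.2
      simpa [sliceCard] using h.sliceCard_le_pow hrank
  calc ∑ x ∈ orthogonalPairs B K, #{r ∈ K | B x.1 r = 0 ∧ B x.2 r = 0}
      ≤ ∑ x ∈ orthogonalPairs B K, (Fintype.card F ^ m +
          if B x.1 = 0 ∨ B x.2 ∈ Submodule.span F {B x.1} then Fintype.card F ^ m else 0) :=
        sum_le_sum hthird
    _ = #(orthogonalPairs B K) * Fintype.card F ^ m +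
          #{x ∈ orthogonalPairs B K | B x.1 = 0 ∨ B x.2 ∈ Submodule.span F {B x.1}} *
            Fintype.card F ^ m := by
        rw [sum_add_distrib, ← sum_filter, sum_const, sum_const, smul_eq_mul, smul_eq_mul]
    _ ≤ _ := by gcongr; exact h.card_filter_orthogonalPairs_dependent_le hker

end Pairs

section Tuples

variable {F V : Type*} [Field F] [AddCommGroup V] [Module F V] {K : Finset V} {m : ℕ}

/-- The linearly independent `m`-tuples of points of `K`. In homogeneous coordinates these are the
affinely independent tuples. -/
noncomputable def independentTuples (F : Type*) {V : Type*} [Field F] [AddCommGroup V] [Module F V]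
    (K : Finset V) (m : ℕ) : Finset (Fin m → V) :=
  {x ∈ Fintype.piFinset fun _ => K | LinearIndependent F x}

lemma mem_independentTuples {x : Fin m → V} :
    x ∈ independentTuples F K m ↔ (∀ i, x i ∈ K) ∧ LinearIndependent F x := by
  simp [independentTuples]

lemma finrank_span_range_of_mem_independentTuples {x : Fin m → V}
    (hx : x ∈ independentTuples F K m) : finrank F (Submodule.span F (Set.range x)) = m := by
  simpa using finrank_span_eq_card (mem_independentTuples.1 hx).2

lemma snoc_mem_independentTuples {x : Fin m → V} {p : V} :
    (Fin.snoc x p : Fin (m + 1) → V) ∈ independentTuples F K (m + 1) ↔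
      x ∈ independentTuples F K m ∧ p ∈ K ∧ p ∉ Submodule.span F (Set.range x) := by
  simp only [mem_independentTuples, Fin.forall_fin_succ', Fin.snoc_castSucc, Fin.snoc_last,
    linearIndependent_finSnoc]
  tauto

lemma sum_independentTuples_succ (K : Finset V) (f : (Fin (m + 1) → V) → ℕ) :
    ∑ x ∈ independentTuples F K (m + 1), f x =
      ∑ x ∈ independentTuples F K m,
        ∑ p ∈ K with p ∉ Submodule.span F (Set.range x), f (Fin.snoc x p) := by
  rw [sum_sigma']
  refine sum_bij' (fun x _ => ⟨Fin.init x, x (Fin.last m)⟩) (fun x _ => Fin.snoc x.1 x.2)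
    (fun x hx => ?_) (fun x hx => ?_) (fun x _ => Fin.snoc_init_self x) (fun x _ => by simp)
    (fun x _ => by simp)
  · rw [← Fin.snoc_init_self x, snoc_mem_independentTuples] at hx
    simpa using hx
  · simpa [snoc_mem_independentTuples] using hx

lemma card_independentTuples_succ (K : Finset V) (m : ℕ) :
    #(independentTuples F K (m + 1)) =
      ∑ x ∈ independentTuples F K m, #{p ∈ K | p ∉ Submodule.span F (Set.range x)} := by
  simpa using sum_independentTuples_succ K fun _ => 1

/-- The number of ordered pairs of points of `K` extending the subspace `S` by two dimensions. -/
noncomputable def extensionCount (K : Finset V) (S : Submodule F V) : ℕ :=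
  ∑ p ∈ K with p ∉ S, #{r ∈ K | r ∉ S ⊔ Submodule.span F {p}}

lemma card_independentTuples_add_two (K : Finset V) (m : ℕ) :
    #(independentTuples F K (m + 2)) =
      ∑ x ∈ independentTuples F K m, extensionCount K (Submodule.span F (Set.range x)) := by
  simp_rw [card_independentTuples_succ, sum_independentTuples_succ, extensionCount, Fin.range_snoc,
    Submodule.span_insert, sup_comm]

lemma cast_card_filter_notMem (K : Finset V) (S : Submodule F V) :
    (#{p ∈ K | p ∉ S} : ℝ) = #K - sliceCard K S :=
  eq_sub_of_add_eq' (by exact_mod_cast sliceCard_add_card_filter_notMem K S)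

lemma IsQuadricPoints.card_independentTuples_one {σ : Dual F V} {B : BilinForm F V}
    (h : IsQuadricPoints σ B K) : #(independentTuples F K 1) = #K := by
  have hne : ∀ p ∈ K, p ≠ 0 := by
    rintro p hp rfl
    simpa using h.height 0 hp
  have hzero : independentTuples F K 0 = univ := by
    ext x
    simp [mem_independentTuples, eq_iff_true_of_subsingleton]
  rw [card_independentTuples_succ, hzero]
  simp [filter_true_of_mem hne]

lemma IsQuadricPoints.pow_mul_sub_le_card_independentTuples [Fintype F] [FiniteDimensional F V]
    {σ : Dual F V} {B : BilinForm F V} (h : IsQuadricPoints σ B K)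
    (hK : Fintype.card F ^ m ≤ #K) :
    (#K : ℝ) ^ m * (#K - ∑ j ∈ range m, (Fintype.card F : ℝ) ^ j) ≤
      #(independentTuples F K (m + 1)) := by
  induction m with
  | zero => simp [h.card_independentTuples_one]
  | succ m ih =>
    have hKm : Fintype.card F ^ m ≤ #K := (Nat.pow_le_pow_right Fintype.card_pos m.le_succ).trans hK
    have hKm' : (Fintype.card F : ℝ) ^ m ≤ #K := by exact_mod_cast hKm
    have hstep : ∀ x ∈ independentTuples F K (m + 1), (#K - (Fintype.card F : ℝ) ^ m) ≤
        #{p ∈ K | p ∉ Submodule.span F (Set.range x)} := fun x hx => by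
      have hslice : (sliceCard K (Submodule.span F (Set.range x)) : ℝ) ≤ Fintype.card F ^ m := by
        exact_mod_cast h.sliceCard_le_pow (finrank_span_range_of_mem_independentTuples hx).le
      rw [cast_card_filter_notMem]
      linarith
    have hgeom : 0 ≤ (∑ j ∈ range m, (Fintype.card F : ℝ) ^ j) * (Fintype.card F : ℝ) ^ m := by
      positivity
    calc (#K : ℝ) ^ (m + 1) * (#K - ∑ j ∈ range (m + 1), (Fintype.card F : ℝ) ^ j)
        = #K ^ m * (#K * (#K - ∑ j ∈ range (m + 1), (Fintype.card F : ℝ) ^ j)) := by ring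
      _ ≤ #K ^ m * ((#K - ∑ j ∈ range m, (Fintype.card F : ℝ) ^ j) *
            (#K - (Fintype.card F : ℝ) ^ m)) := by
          rw [sum_range_succ]
          refine mul_le_mul_of_nonneg_left ?_ (by positivity)
          linarith
      _ ≤ #(independentTuples F K (m + 1)) * (#K - (Fintype.card F : ℝ) ^ m) := by
          rw [← mul_assoc]
          exact mul_le_mul_of_nonneg_right (ih hKm) (sub_nonneg.2 hKm')
      _ ≤ #(independentTuples F K (m + 2)) := by
          rw [card_independentTuples_succ K (m + 1), ← nsmul_eq_mul, Nat.cast_sum]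
          exact card_nsmul_le_sum _ _ _ hstep

end Tuples

section Extensions

variable {F V : Type*} [Field F] [AddCommGroup V] [Module F V] {K : Finset V} {S : Submodule F V}
  {a M : ℝ}

lemma sup_span_singleton_eq_of_mem {p r : V} (hr : r ∈ S ⊔ Submodule.span F {p}) (hrS : r ∉ S) :
    S ⊔ Submodule.span F {r} = S ⊔ Submodule.span F {p} := by
  have hwcov := Submodule.wcovBy_span_singleton_sup (K := F) p S
  rw [sup_comm] at hwcov
  refine (hwcov.eq_or_eq le_sup_left (sup_le le_sup_left (by simpa using hr))).resolve_left
    fun heq => hrS ?_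
  rw [← heq]
  exact Submodule.mem_sup_right (Submodule.mem_span_singleton_self r)

lemma cast_extensionCount (K : Finset V) (S : Submodule F V) :
    (extensionCount K S : ℝ) =
      ∑ p ∈ K with p ∉ S, (#K - sliceCard K (S ⊔ Submodule.span F {p}) : ℝ) := by
  simp_rw [extensionCount, Nat.cast_sum, cast_card_filter_notMem]

lemma sub_mul_sub_le_extensionCount (hMK : M ≤ #K) (ha : sliceCard K S ≤ a)
    (hM : ∀ p ∈ K, p ∉ S → sliceCard K (S ⊔ Submodule.span F {p}) ≤ M) :
    (#K - a) * (#K - M) ≤ extensionCount K S :=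
  calc (#K - a) * (#K - M) ≤ (#K - sliceCard K S) * (#K - M) := by gcongr
    _ = #{p ∈ K | p ∉ S} • (#K - M) := by rw [nsmul_eq_mul, cast_card_filter_notMem]
    _ ≤ ∑ p ∈ K with p ∉ S, (#K - sliceCard K (S ⊔ Submodule.span F {p}) : ℝ) :=
        card_nsmul_le_sum _ _ _ fun p hp => by
          have := hM p (mem_filter.1 hp).1 (mem_filter.1 hp).2
          linarith
    _ = extensionCount K S := (cast_extensionCount K S).symm

lemma sliceCard_add_card_filter_mem_notMem {T : Submodule F V} (K : Finset V) (hST : S ≤ T) :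
    sliceCard K S + #{p ∈ K | p ∈ T ∧ p ∉ S} = sliceCard K T := by
  have := card_filter_add_card_filter_not (s := {p ∈ K | p ∈ T}) (fun p => p ∈ S)
  simp only [filter_filter] at this
  rwa [filter_congr fun p _ => and_iff_right_of_imp (@hST p)] at this

lemma two_mul_card_mul_card_le_extensionCount (K : Finset V) (S : Submodule F V) (p : V) :
    2 * (#{r ∈ K | r ∈ S ⊔ Submodule.span F {p} ∧ r ∉ S} *
      #{r ∈ K | r ∉ S ⊔ Submodule.span F {p}}) ≤
      extensionCount K S := by
  set T := S ⊔ Submodule.span F {p} with hT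
  have hST : S ≤ T := le_sup_left
  have hin : #{r ∈ K | r ∈ T ∧ r ∉ S} * #{r ∈ K | r ∉ T} ≤
      ∑ r ∈ K with r ∈ T ∧ r ∉ S, #{s ∈ K | s ∉ S ⊔ Submodule.span F {r}} := by
    rw [← smul_eq_mul]
    refine card_nsmul_le_sum _ _ _ fun r hr => ?_
    rw [sup_span_singleton_eq_of_mem (mem_filter.1 hr).2.1 (mem_filter.1 hr).2.2]
  have hout : #{r ∈ K | r ∉ T} * #{r ∈ K | r ∈ T ∧ r ∉ S} ≤
      ∑ r ∈ K with r ∉ T, #{s ∈ K | s ∉ S ⊔ Submodule.span F {r}} := by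
    rw [← smul_eq_mul]
    refine card_nsmul_le_sum _ _ _ fun r hr => card_le_card <|
      monotone_filter_right _ fun s _ ⟨hsT, hsS⟩ hs => (mem_filter.1 hr).2 ?_
    rw [hT, ← sup_span_singleton_eq_of_mem hsT hsS, sup_span_singleton_eq_of_mem hs hsS]
    exact Submodule.mem_sup_right (Submodule.mem_span_singleton_self r)
  have hsplit := sum_filter_add_sum_filter_not {r ∈ K | r ∉ S} (fun r => r ∈ T)
    fun r => #{s ∈ K | s ∉ S ⊔ Submodule.span F {r}}
  simp only [filter_filter] at hsplit
  rw [filter_congr fun r _ => and_comm, filter_congr fun r _ => and_iff_right_of_imp (mt (@hST r))]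
    at hsplit
  rw [extensionCount, ← hsplit, two_mul]
  exact add_le_add hin (by rwa [mul_comm])

lemma two_mul_sub_mul_sub_le_extensionCount (hMK : M ≤ #K) (hSM : sliceCard K S ≤ M)
    (hM : ∀ p ∈ K, p ∉ S → sliceCard K (S ⊔ Submodule.span F {p}) ≤ M) :
    2 * (#K - M) * (M - sliceCard K S) ≤ extensionCount K S := by
  obtain hempty | hne := {p ∈ K | p ∉ S}.eq_empty_or_nonempty
  · have hall := cast_card_filter_notMem K S
    rw [hempty, card_empty, Nat.cast_zero, eq_comm, sub_eq_zero] at hall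
    rw [← hall, le_antisymm hMK (hall ▸ hSM)]
    simp
  obtain ⟨p, hp, hmax⟩ := exists_max_image _ (fun p => sliceCard K (S ⊔ Submodule.span F {p})) hne
  set T := S ⊔ Submodule.span F {p}
  have hTM : (sliceCard K T : ℝ) ≤ M := hM p (mem_filter.1 hp).1 (mem_filter.1 hp).2
  have : (sliceCard K S : ℝ) ≤ sliceCard K T := by exact_mod_cast sliceCard_mono K le_sup_left
  have hcoarse : (#K - sliceCard K S) * (#K - sliceCard K T : ℝ) ≤ extensionCount K S :=
    sub_mul_sub_le_extensionCount (hTM.trans hMK) le_rfl fun r hr hrS => by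
      exact_mod_cast hmax r (mem_filter.2 ⟨hr, hrS⟩)
  have hfine : 2 * ((sliceCard K T - sliceCard K S) * (#K - sliceCard K T : ℝ)) ≤
      extensionCount K S := by
    have hle : (2 * (#{r ∈ K | r ∈ T ∧ r ∉ S} * #{r ∈ K | r ∉ T}) : ℝ) ≤ extensionCount K S := by
      exact_mod_cast two_mul_card_mul_card_le_extensionCount K S p
    have hTS : (sliceCard K S + #{r ∈ K | r ∈ T ∧ r ∉ S} : ℝ) = sliceCard K T := by
      exact_mod_cast sliceCard_add_card_filter_mem_notMem K le_sup_left
    rwa [cast_card_filter_notMem, eq_sub_of_add_eq' hTS] at hle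
  obtain hlarge | hsmall := le_total ((#K + sliceCard K S : ℝ) / 2) (sliceCard K T)
  · have hsum : (0 : ℝ) ≤ sliceCard K T + M - (#K + sliceCard K S) := by linarith
    linarith [mul_nonneg (sub_nonneg.2 hTM) hsum]
  · nlinarith [mul_nonneg (show (0 : ℝ) ≤ #K - sliceCard K S by linarith)
      (sub_nonneg.2 hsmall), sq_nonneg ((#K - M) - (M - sliceCard K S))]

variable [Fintype F] {f : ℕ}

lemma cast_card_filter_notMem_and_mem [Fintype V] {T : Submodule F V} (hST : S ≤ T) :
    (#{v | v ∉ S ∧ v ∈ T} : ℝ) =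
      (Fintype.card F : ℝ) ^ finrank F T - (Fintype.card F : ℝ) ^ finrank F S := by
  have hsplit := card_filter_add_card_filter_not (s := {v | v ∈ T}) (fun v => v ∈ S)
  simp only [filter_filter] at hsplit
  rw [filter_congr fun v _ => and_iff_right_of_imp (@hST v), filter_congr fun v _ => and_comm,
    card_filter_mem_submodule, card_filter_mem_submodule] at hsplit
  exact eq_sub_of_add_eq' (by exact_mod_cast hsplit)

lemma sub_sliceCard_le_of_pencil (hV : finrank F V = finrank F S + 2)
    (hf : ∀ v ∉ S, sliceCard K (S ⊔ Submodule.span F {v}) ≤ f) :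
    (#K - sliceCard K S : ℝ) ≤ (Fintype.card F + 1) * (f - sliceCard K S) := by
  have : FiniteDimensional F V := Module.finite_of_finrank_pos (by omega)
  have : Finite V := Module.finite_of_finite F
  have : Fintype V := Fintype.ofFinite V
  set q : ℝ := (Fintype.card F : ℝ)
  have hq : 1 < q := Nat.one_lt_cast.2 Fintype.one_lt_card
  have habove : ∀ p ∈ {p ∈ K | p ∉ S}, q ^ finrank F S * (q - 1) ≤
      #(bipartiteAbove (fun p v => v ∈ S ⊔ Submodule.span F {p}) {v | v ∉ S} p) := fun p hp => by
    rw [bipartiteAbove, filter_filter, cast_card_filter_notMem_and_mem le_sup_left,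
      Submodule.finrank_sup_span_singleton (mem_filter.1 hp).2, pow_succ, mul_sub_one]
  have hbelow : ∀ v ∈ ({v | v ∉ S} : Finset V),
      (#(bipartiteBelow (fun p v => v ∈ S ⊔ Submodule.span F {p}) {p ∈ K | p ∉ S} v) : ℝ) ≤
        f - sliceCard K S := fun v hv => by
    have hvS : v ∉ S := (mem_filter.1 hv).2
    have hsplit := sliceCard_add_card_filter_mem_notMem (S := S) (T := S ⊔ Submodule.span F {v}) K
      le_sup_left
    rw [le_sub_iff_add_le', bipartiteBelow, filter_filter]
    refine le_trans ?_ (Nat.cast_le.2 (hsplit.trans_le (hf v hvS)))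
    push_cast
    refine add_le_add_right (Nat.cast_le.2 <| card_le_card <|
      monotone_filter_right _ fun p _ ⟨hpS, hvp⟩ => ⟨?_, hpS⟩) _
    rw [sup_span_singleton_eq_of_mem hvp hvS]
    exact Submodule.mem_sup_right (Submodule.mem_span_singleton_self p)
  have hnotMem : (#{v | v ∉ S} : ℝ) = q ^ finrank F S * ((q - 1) * (q + 1)) := by
    have hcount := cast_card_filter_notMem_and_mem (S := S) (T := ⊤) le_top
    simp only [Submodule.mem_top, and_true, finrank_top, hV] at hcount
    rw [hcount]
    ring
  have hdouble := card_nsmul_le_card_nsmul _ habove hbelow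
  rw [nsmul_eq_mul, nsmul_eq_mul, cast_card_filter_notMem, hnotMem] at hdouble
  have hpos : 0 < q ^ finrank F S * (q - 1) := mul_pos (by positivity) (sub_pos.2 hq)
  refine le_of_mul_le_mul_left ?_ hpos
  linarith

end Extensions

section Goodman

variable {ι : Type*} {s : Finset ι} {w : ι → ι → ℝ}

/- The Bonferroni inequality `b c ≥ b + c - 1` on `[0, 1]` bounds the weight of a triangle below by
the weights of its two-edge paths. -/
lemma two_mul_sum_sq_sub_le_sum_triangles (hsymm : ∀ i j, w i j = w j i) (h0 : ∀ i j, 0 ≤ w i j)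
    (h1 : ∀ i j, w i j ≤ 1) :
    2 * ∑ i ∈ s, (∑ j ∈ s, w i j) ^ 2 - #s * ∑ i ∈ s, ∑ j ∈ s, w i j ≤
      ∑ i ∈ s, ∑ j ∈ s, ∑ k ∈ s, w i j * w i k * w j k := by
  have hpath : ∑ i ∈ s, ∑ j ∈ s, ∑ k ∈ s, w i j * w i k = ∑ i ∈ s, (∑ j ∈ s, w i j) ^ 2 := by
    simp_rw [sq, sum_mul_sum]
  have hpath' : ∑ i ∈ s, ∑ j ∈ s, ∑ k ∈ s, w i j * w j k = ∑ i ∈ s, (∑ j ∈ s, w i j) ^ 2 := by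
    rw [sum_comm, ← hpath]
    simp_rw [hsymm]
  have hedge : ∑ i ∈ s, ∑ j ∈ s, ∑ _k ∈ s, w i j = #s * ∑ i ∈ s, ∑ j ∈ s, w i j := by
    simp_rw [sum_const, nsmul_eq_mul, mul_sum]
  have hbonferroni : ∀ i j k, w i j * w i k + w i j * w j k - w i j ≤ w i j * w i k * w j k :=
    fun i j k => by
      linarith [mul_nonneg (h0 i j) (mul_nonneg (sub_nonneg.2 (h1 i k)) (sub_nonneg.2 (h1 j k)))]
  calc 2 * ∑ i ∈ s, (∑ j ∈ s, w i j) ^ 2 - #s * ∑ i ∈ s, ∑ j ∈ s, w i j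
      = ∑ i ∈ s, ∑ j ∈ s, ∑ k ∈ s, (w i j * w i k + w i j * w j k - w i j) := by
        simp_rw [sum_sub_distrib, sum_add_distrib]
        rw [hpath, hpath', hedge, two_mul]
    _ ≤ _ := sum_le_sum fun i _ => sum_le_sum fun j _ => sum_le_sum fun k _ => hbonferroni i j k

lemma goodman_sum_mul_le (hsymm : ∀ i j, w i j = w j i) (h0 : ∀ i j, 0 ≤ w i j)
    (h1 : ∀ i j, w i j ≤ 1) :
    (∑ i ∈ s, ∑ j ∈ s, w i j) * (2 * ∑ i ∈ s, ∑ j ∈ s, w i j - #s ^ 2) ≤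
      #s * ∑ i ∈ s, ∑ j ∈ s, ∑ k ∈ s, w i j * w i k * w j k := by
  have hcs : (∑ i ∈ s, ∑ j ∈ s, w i j) ^ 2 ≤ #s * ∑ i ∈ s, (∑ j ∈ s, w i j) ^ 2 :=
    sq_sum_le_card_mul_sum_sq
  have htri := mul_le_mul_of_nonneg_left
    (two_mul_sum_sq_sub_le_sum_triangles (s := s) hsymm h0 h1) (Nat.cast_nonneg (#s))
  linarith

end Goodman

section Triples

variable {F V : Type*} [Field F] [AddCommGroup V] [Module F V] {σ : Dual F V} {B : BilinForm F V}
  {K : Finset V} {S : Submodule F V} {m : ℕ}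

/-- The independent triples of points of `K` no two of which are orthogonal: for points of the
quadric of `B`, no line through two of them lies on the quadric. -/
noncomputable def nonorthogonalTriples (B : BilinForm F V) (K : Finset V) : Finset (Fin 3 → V) :=
  {x ∈ independentTuples F K 3 | Pairwise fun i j => B (x i) (x j) ≠ 0}

/-- The independent triples of points of `K` on whose span `B` vanishes: for points of the quadric
of `B`, those spanning a plane on the quadric. -/
noncomputable def orthogonalTriples (B : BilinForm F V) (K : Finset V) : Finset (Fin 3 → V) :=
  {x ∈ independentTuples F K 3 | ∀ i j, B (x i) (x j) = 0}

lemma linearIndependent_of_pairwise_nonorthogonal (hB : B.IsSymm) (h2 : (2 : F) ≠ 0)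
    {x : Fin 3 → V} (hx : ∀ i, B (x i) (x i) = 0) (hne : Pairwise fun i j => B (x i) (x j) ≠ 0) :
    LinearIndependent F x := by
  rw [Fintype.linearIndependent_iff]
  intro g hg
  have h01 : B (x 0) (x 1) ≠ 0 := hne (by decide)
  have h02 : B (x 0) (x 2) ≠ 0 := hne (by decide)
  have h12 : B (x 1) (x 2) ≠ 0 := hne (by decide)
  have hpair : ∀ i, ∑ j, g j * B (x i) (x j) = 0 := fun i => by
    simpa [map_sum] using congrArg (B (x i)) hg
  have e0 := hpair 0
  have e1 := hpair 1
  have e2 := hpair 2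
  simp only [Fin.sum_univ_three, hx, hB.eq (x 1) (x 0), hB.eq (x 2) (x 0), hB.eq (x 2) (x 1)]
    at e0 e1 e2
  have h0 : 2 * B (x 0) (x 1) * B (x 0) (x 2) * g 0 = 0 := by
    linear_combination -B (x 1) (x 2) * e0 + B (x 0) (x 2) * e1 + B (x 0) (x 1) * e2
  have h1 : 2 * B (x 0) (x 1) * B (x 1) (x 2) * g 1 = 0 := by
    linear_combination B (x 1) (x 2) * e0 - B (x 0) (x 2) * e1 + B (x 0) (x 1) * e2
  have h2' : 2 * B (x 0) (x 2) * B (x 1) (x 2) * g 2 = 0 := by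
    linear_combination B (x 1) (x 2) * e0 + B (x 0) (x 2) * e1 - B (x 0) (x 1) * e2
  intro i
  fin_cases i <;> simp_all

lemma IsQuadricPoints.sum_nonorthogonal_eq (h : IsQuadricPoints σ B K) :
    ∑ p ∈ K, ∑ r ∈ K, (if B p r = 0 then 0 else 1 : ℝ) =
      #K * (#K - 1) - #(orthogonalPairs B K) := by
  have hpairs : (#(orthogonalPairs B K) + #K : ℝ) = ∑ v ∈ K, (#{p ∈ K | B p v = 0} : ℝ) :=
    mod_cast h.card_orthogonalPairs_add_card
  have hrow : ∀ p ∈ K, ∑ r ∈ K, (if B p r = 0 then 0 else 1 : ℝ) = #K - #{r ∈ K | B r p = 0} :=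
    fun p _ => by
      rw [← card_filter_add_card_filter_not (s := K) fun r => B r p = 0]
      simp [h.symm.eq p, sum_ite]
  rw [sum_congr rfl hrow, sum_sub_distrib, ← hpairs, sum_const, nsmul_eq_mul]
  ring

lemma IsQuadricPoints.card_nonorthogonalTriples (h : IsQuadricPoints σ B K) (h2 : (2 : F) ≠ 0) :
    (#(nonorthogonalTriples B K) : ℝ) = ∑ p ∈ K, ∑ r ∈ K, ∑ s ∈ K,
      (if B p r = 0 then 0 else 1) * (if B p s = 0 then 0 else 1) *
        (if B r s = 0 then 0 else 1) := by
  have htriples : #(nonorthogonalTriples B K) =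
      #{t ∈ K ×ˢ K ×ˢ K | B t.1 t.2.1 ≠ 0 ∧ B t.1 t.2.2 ≠ 0 ∧ B t.2.1 t.2.2 ≠ 0} := by
    refine card_nbij' (fun x => (x 0, x 1, x 2)) (fun t => ![t.1, t.2.1, t.2.2]) ?_ ?_ ?_ ?_
    · intro x hx
      obtain ⟨hx, hne⟩ := mem_filter.1 hx
      have hxK := (mem_independentTuples.1 hx).1
      simp [hxK, hne (show (0 : Fin 3) ≠ 1 by decide), hne (show (0 : Fin 3) ≠ 2 by decide),
        hne (show (1 : Fin 3) ≠ 2 by decide)]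
    · rintro ⟨p, r, s⟩ ht
      simp only [coe_filter, mem_product, Set.mem_ofPred_eq] at ht
      obtain ⟨⟨hp, hr, hs⟩, hpr, hps, hrs⟩ := ht
      have hK : ∀ i, ![p, r, s] i ∈ K := by simp [Fin.forall_fin_succ, hp, hr, hs]
      have hne : Pairwise fun i j => B (![p, r, s] i) (![p, r, s] j) ≠ 0 := by
        intro i j hij
        fin_cases i <;> fin_cases j <;> simp_all [h.symm.eq]
      exact mem_filter.2 ⟨mem_independentTuples.2 ⟨hK, linearIndependent_of_pairwise_nonorthogonal
        h.symm h2 (fun i => h.isotropic _ (hK i)) hne⟩, hne⟩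
    · intro x _
      ext i
      fin_cases i <;> rfl
    · intro t _
      rfl
  rw [htriples, ← sum_boole, sum_product]
  simp only [sum_product]
  refine sum_congr rfl fun p _ => sum_congr rfl fun r _ => sum_congr rfl fun s _ => ?_
  split_ifs <;> simp_all

lemma IsQuadricPoints.goodman_le_card_mul_card_nonorthogonalTriples (h : IsQuadricPoints σ B K)
    (h2 : (2 : F) ≠ 0) :
    (#K * (#K - 1) - #(orthogonalPairs B K) : ℝ) *
        (2 * (#K * (#K - 1) - #(orthogonalPairs B K)) - #K ^ 2) ≤
      #K * #(nonorthogonalTriples B K) := by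
  rw [← h.sum_nonorthogonal_eq, h.card_nonorthogonalTriples h2]
  exact goodman_sum_mul_le (fun p r => by rw [h.symm.eq])
    (fun p r => by split_ifs <;> norm_num) (fun p r => by split_ifs <;> norm_num)

lemma card_orthogonalTriples_le (B : BilinForm F V) (K : Finset V) :
    #(orthogonalTriples B K) ≤
      ∑ x ∈ orthogonalPairs B K, #{r ∈ K | B x.1 r = 0 ∧ B x.2 r = 0} := by
  rw [← card_sigma]
  refine card_le_card_of_injOn (fun x => ⟨(x 0, x 1), x 2⟩) (fun x hx => ?_) fun x _ y _ hxy => ?_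
  · obtain ⟨hx, horth⟩ := mem_filter.1 hx
    obtain ⟨hxK, hxind⟩ := mem_independentTuples.1 hx
    simp [orthogonalPairs, hxK, horth, hxind.injective.ne (show (0 : Fin 3) ≠ 1 by decide)]
  · simp only [Sigma.mk.injEq, Prod.mk.injEq, heq_eq_eq] at hxy
    ext i
    fin_cases i
    exacts [hxy.1.1, hxy.1.2, hxy.2]

lemma card_filter_independentTuples_two_le (B : BilinForm F V) (K : Finset V) :
    #{x ∈ independentTuples F K 2 | B (x 0) (x 1) = 0} ≤ #(orthogonalPairs B K) := by
  refine card_le_card_of_injOn (fun x => (x 0, x 1)) (fun x hx => ?_) fun x _ y _ hxy => ?_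
  · obtain ⟨hx, horth⟩ := mem_filter.1 hx
    obtain ⟨hxK, hxind⟩ := mem_independentTuples.1 hx
    simp [orthogonalPairs, hxK, horth, hxind.injective.ne (show (0 : Fin 2) ≠ 1 by decide)]
  · simp only [Prod.mk.injEq] at hxy
    ext i
    fin_cases i
    exacts [hxy.1, hxy.2]

variable [Fintype F] [FiniteDimensional F V]

lemma IsQuadricPoints.sliceCard_span_range_le (h : IsQuadricPoints σ B K) (h2 : (2 : F) ≠ 0)
    {x : Fin (m + 2) → V} (hx : x ∈ independentTuples F K (m + 2)) {i j : Fin (m + 2)}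
    (hij : B (x i) (x j) ≠ 0) :
    sliceCard K (Submodule.span F (Set.range x)) ≤ 2 * Fintype.card F ^ m :=
  h.sliceCard_le_two_mul_pow h2 (finrank_span_range_of_mem_independentTuples hx).le fun hiso =>
    hij (hiso _ (Submodule.subset_span ⟨i, rfl⟩) _ (Submodule.subset_span ⟨j, rfl⟩))

lemma IsQuadricPoints.sliceCard_le_of_mem_nonorthogonalTriples (h : IsQuadricPoints σ B K)
    (h2 : (2 : F) ≠ 0) {x : Fin 3 → V} (hx : x ∈ nonorthogonalTriples B K) (hxS : ∀ i, x i ∈ S)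
    (hS : finrank F S ≤ m + 3) : sliceCard K S ≤ (Fintype.card F + 1) * Fintype.card F ^ m := by
  obtain ⟨hxind, hne⟩ := mem_filter.1 hx
  have hiso : ∀ i, B (x i) (x i) = 0 := fun i => h.isotropic _ ((mem_independentTuples.1 hxind).1 i)
  refine h.sliceCard_le_card_add_one_mul_pow h2 hS fun T hTS hT => ?_
  have := hT.finrank_add_two_le h.symm h2 hTS (hxS 0) (hxS 1) (hxS 2) (hiso 0) (hiso 1) (hiso 2)
    (hne (by decide)) (hne (by decide)) (hne (by decide))
  omega

lemma IsQuadricPoints.le_card_independentTuples_three (h : IsQuadricPoints σ B K)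
    (h2 : (2 : F) ≠ 0) (h3 : 3 ≤ Fintype.card F) (hK : Fintype.card F ≤ #K) :
    (#K * (#K - 1) * (#K - 2) - (Fintype.card F - 2) * #(orthogonalPairs B K) : ℝ) ≤
      #(independentTuples F K 3) := by
  have hq : (3 : ℝ) ≤ Fintype.card F := mod_cast h3
  have hKq : (Fintype.card F : ℝ) ≤ #K := mod_cast hK
  have hpairs : (#K * (#K - 1) : ℝ) ≤ #(independentTuples F K 2) := by
    simpa using h.pow_mul_sub_le_card_independentTuples (m := 1) (by simpa using hK)
  have hext : ∀ x ∈ independentTuples F K 2,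
      (#K - 2 - (Fintype.card F - 2) * (if B (x 0) (x 1) = 0 then 1 else 0) : ℝ) ≤
        #{p ∈ K | p ∉ Submodule.span F (Set.range x)} := fun x hx => by
    rw [cast_card_filter_notMem]
    split_ifs with hx01
    · have : (sliceCard K (Submodule.span F (Set.range x)) : ℝ) ≤ Fintype.card F := by
        simpa using Nat.cast_le (α := ℝ).2
          (h.sliceCard_le_pow (m := 1) (finrank_span_range_of_mem_independentTuples hx).le)
      linarith
    · have : (sliceCard K (Submodule.span F (Set.range x)) : ℝ) ≤ 2 := by
        simpa using Nat.cast_le (α := ℝ).2 (h.sliceCard_span_range_le h2 (m := 0) hx hx01)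
      linarith
  have hortho : (#{x ∈ independentTuples F K 2 | B (x 0) (x 1) = 0} : ℝ) ≤
      #(orthogonalPairs B K) := mod_cast card_filter_independentTuples_two_le B K
  calc (#K * (#K - 1) * (#K - 2) - (Fintype.card F - 2) * #(orthogonalPairs B K) : ℝ)
      ≤ #(independentTuples F K 2) * (#K - 2) -
          (Fintype.card F - 2) * #{x ∈ independentTuples F K 2 | B (x 0) (x 1) = 0} := by
        gcongr <;> linarith
    _ = ∑ x ∈ independentTuples F K 2,
          (#K - 2 - (Fintype.card F - 2) * (if B (x 0) (x 1) = 0 then 1 else 0) : ℝ) := by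
        rw [sum_sub_distrib, sum_const, nsmul_eq_mul, ← mul_sum, sum_boole]
    _ ≤ #(independentTuples F K 3) := by
        rw [card_independentTuples_succ, Nat.cast_sum]
        exact sum_le_sum hext

end Triples

section RealEstimates

variable {q k u y : ℝ}

lemma pencil_estimate (hq : 3 ≤ q) (hu : 0 ≤ u) (hk : 2 * q * u ≤ k) :
    q * (q - 1) * k ^ 2 * (k - 2 * q * u) ≤
      (q + 1) * (k - (q + 1) * u) ^ 2 * (k * (q - 1) - q * u) := by
  obtain ⟨v, hv, rfl⟩ : ∃ v, 0 ≤ v ∧ q = 3 + v := ⟨q - 3, by linarith, by ring⟩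
  obtain ⟨x, hx, rfl⟩ : ∃ x, 0 ≤ x ∧ k = 2 * (3 + v) * u + x :=
    ⟨k - 2 * (3 + v) * u, by linarith, by ring⟩
  have hcoeff₀ : 0 ≤ 144 * u ^ 3 - 40 * u ^ 2 * x - 4 * u * x ^ 2 + 2 * x ^ 3 := by
    nlinarith [mul_nonneg hx (sq_nonneg (3 * x - 10 * u)),
      mul_nonneg hu (sq_nonneg (3 * x - 10 * u)), pow_nonneg hu 3, pow_nonneg hx 3]
  have hcoeff₁ : 0 ≤ 324 * u ^ 3 - 16 * u ^ 2 * x + u * x ^ 2 + x ^ 3 := by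
    nlinarith [mul_nonneg hu (sq_nonneg (x - 8 * u)), pow_nonneg hu 3, pow_nonneg hx 3]
  have hrest : 0 ≤ v ^ 2 * (284 * u ^ 3 + 14 * u ^ 2 * x + u * x ^ 2) +
      v ^ 3 * (121 * u ^ 3 + 8 * u ^ 2 * x) + v ^ 4 * (25 * u ^ 3 + u ^ 2 * x) +
      2 * v ^ 5 * u ^ 3 := by positivity
  linarith [mul_nonneg hv hcoeff₁]

lemma rank_four_estimate (hq : 3 ≤ q) (hy : 2 ≤ y) (hk : k = q * y) :
    (k - 1) * (k - 2) * (k - 3) - 2 * q * k ^ 2 ≤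
      (k - 2 * q) * ((k - 1) * (k - 2) - (q - 2) * (y + q - 1)) +
        (q - 1) * ((k - 1 - (y + q - 1)) * (2 * (k - 1 - (y + q - 1)) - k)) := by
  obtain ⟨v, hv, rfl⟩ : ∃ v, 0 ≤ v ∧ q = 3 + v := ⟨q - 3, by linarith, by ring⟩
  obtain ⟨x, hx, rfl⟩ : ∃ x, 0 ≤ x ∧ y = 2 + x := ⟨y - 2, by linarith, by ring⟩
  subst hk
  rw [← sub_nonneg]
  -- All coefficients in `v` and `x` are nonnegative.
  ring_nf
  positivity

lemma rank_five_estimate_of_le (hq : 3 ≤ q) (hy : 2 * q ≤ y) (hy' : y ≤ 3 * q) (hk : k = q * y) :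
    (k - 1) * (k - 2) * (k - 3) * (k - 4) - 2 * q ^ 2 * k ^ 3 ≤
      4 * (q ^ 2 - q) * (k - 2 * q ^ 2) * ((k - 1) * (k - 2) - (q - 2) * (y + q ^ 2 + 1)) -
        (k - 2 * q ^ 2) * (5 * q ^ 2 - 4 * q - k) *
          ((y + q ^ 2 + 1) * q ^ 2 + (q + 1) * q ^ 2) := by
  obtain ⟨x, hx, rfl⟩ : ∃ x, 0 ≤ x ∧ y = 2 * q + x := ⟨y - 2 * q, by linarith, by ring⟩
  have hxq : 0 ≤ q - x := by linarith
  have hcoeff : 0 ≤ -24 + 100 * q ^ 2 - 140 * q ^ 4 + 80 * q ^ 6 ∧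
      0 ≤ 50 * q - 16 * q ^ 2 - 136 * q ^ 3 + 44 * q ^ 4 + 106 * q ^ 5 - 25 * q ^ 6 + 5 * q ^ 7 ∧
      0 ≤ -43 * q ^ 2 + 24 * q ^ 3 + 60 * q ^ 4 - 19 * q ^ 5 + 2 * q ^ 6 ∧
      0 ≤ -10 * q ^ 3 + 3 * q ^ 4 + 3 * q ^ 5 := by
    obtain ⟨v, hv, rfl⟩ : ∃ v, 0 ≤ v ∧ q = 3 + v := ⟨q - 3, by linarith, by ring⟩
    refine ⟨?_, ?_, ?_, ?_⟩ <;> ring_nf <;> positivity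
  obtain ⟨hc₀, hc₁, hc₂, hc₃⟩ := hcoeff
  have : 0 ≤ q := by linarith
  have h0 := mul_nonneg hc₁ hx
  have h1 := mul_nonneg hc₂ (sq_nonneg x)
  have h2 := mul_nonneg (mul_nonneg hc₃ hxq) (sq_nonneg x)
  have h3 : 0 ≤ q ^ 4 * x ^ 3 * (q - x) := by positivity
  subst hk
  linarith

lemma rank_five_estimate_of_ge (hq : 3 ≤ q) (hy : 3 * q ≤ y) (hk : k = q * y) :
    (k - 1) * (k - 2) * (k - 3) * (k - 4) - 2 * q ^ 2 * k ^ 3 ≤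
      (k - 2 * q) * (k - 2 * q ^ 2) * ((k - 1) * (k - 2) - (q - 2) * (y + q ^ 2 + 1)) +
        (k - 2 * q) * (q ^ 2 - q) *
          ((k - 1 - (y + q ^ 2 + 1)) * (2 * (k - 1 - (y + q ^ 2 + 1)) - k)) -
        (q ^ 2 - 2 * q) * (k - 2 * q ^ 2) * ((y + q ^ 2 + 1) * q ^ 2 + (q + 1) * q ^ 2) := by
  obtain ⟨v, hv, rfl⟩ : ∃ v, 0 ≤ v ∧ q = 3 + v := ⟨q - 3, by linarith, by ring⟩
  obtain ⟨x, hx, rfl⟩ : ∃ x, 0 ≤ x ∧ y = 3 * (3 + v) + x := ⟨y - 3 * (3 + v), by linarith, by ring⟩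
  subst hk
  rw [← sub_nonneg]
  -- Multiplying by `q ^ 5` makes all coefficients in `v` and `x` nonnegative.
  refine nonneg_of_mul_nonneg_right (a := (3 + v) ^ 5) ?_ (by positivity)
  ring_nf
  positivity

end RealEstimates

section Counting

variable {F V : Type*} [Field F] [AddCommGroup V] [Module F V] {σ : Dual F V}
  {B : BilinForm F V} {K : Finset V} {S : Submodule F V} {m : ℕ} {u : ℝ}

lemma IsQuadricPoints.mul_sub_mul_le_card_nonorthogonalTriples (h : IsQuadricPoints σ B K)
    (h2 : (2 : F) ≠ 0) (hU : #(orthogonalPairs B K) ≤ #K * u) (hu : u ≤ #K - 1) :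
    #K * ((#K - 1 - u) * (2 * (#K - 1 - u) - #K)) ≤ #(nonorthogonalTriples B K) := by
  obtain hK | hK := (Nat.cast_nonneg (α := ℝ) (#K)).eq_or_lt
  · rw [← hK, zero_mul]
    exact Nat.cast_nonneg _
  have hgoodman := h.goodman_le_card_mul_card_nonorthogonalTriples h2
  set k : ℝ := (#K : ℝ)
  set e : ℝ := k * (k - 1) - #(orthogonalPairs B K)
  have hlow : k * (k - 1 - u) ≤ e := by linarith
  have hlow0 : 0 ≤ k * (k - 1 - u) := mul_nonneg hK.le (by linarith)
  obtain hneg | hpos := le_total (2 * (k - 1 - u) - k) 0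
  · refine (mul_nonpos_of_nonneg_of_nonpos hK.le ?_).trans (Nat.cast_nonneg _)
    exact mul_nonpos_of_nonneg_of_nonpos (by linarith) hneg
  · refine le_of_mul_le_mul_left (le_trans ?_ hgoodman) hK
    calc k * (k * ((k - 1 - u) * (2 * (k - 1 - u) - k)))
        = k * (k - 1 - u) * (2 * (k * (k - 1 - u)) - k ^ 2) := by ring
      _ ≤ e * (2 * e - k ^ 2) := by
        gcongr
        · linarith [mul_nonneg hK.le hpos]
        · exact hlow0.trans hlow

lemma exists_ne_zero_of_notMem_orthogonalTriples {x : Fin 3 → V} (hx : x ∈ independentTuples F K 3)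
    (hxB : x ∉ orthogonalTriples B K) : ∃ i j, B (x i) (x j) ≠ 0 := by
  by_contra! hall
  exact hxB (mem_filter.2 ⟨hx, hall⟩)

variable [Fintype F] [FiniteDimensional F V]

lemma IsQuadricPoints.mul_sub_mul_le_card_independentTuples_three (h : IsQuadricPoints σ B K)
    (h2 : (2 : F) ≠ 0) (h3 : 3 ≤ Fintype.card F) (hK : Fintype.card F ≤ #K)
    (hU : #(orthogonalPairs B K) ≤ #K * u) :
    #K * ((#K - 1) * (#K - 2) - (Fintype.card F - 2) * u) ≤ #(independentTuples F K 3) := by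
  have hq : (3 : ℝ) ≤ Fintype.card F := mod_cast h3
  have hmul := mul_le_mul_of_nonneg_left hU (by linarith : (0 : ℝ) ≤ Fintype.card F - 2)
  linarith [h.le_card_independentTuples_three h2 h3 hK]

lemma IsQuadricPoints.sliceCard_le_two_mul_pow_of_finrank_add_one_lt (h : IsQuadricPoints σ B K)
    (h2 : (2 : F) ≠ 0) (hker : finrank F (ker B) ≤ 1) (hS : finrank F S = m + 2)
    (hV : finrank F V + 1 < 2 * (m + 2)) : sliceCard K S ≤ 2 * Fintype.card F ^ m :=
  h.sliceCard_le_two_mul_pow h2 hS.le fun hiso => by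
    have := two_mul_finrank_le_of_isTotallyIsotropic h.symm hiso
    omega

lemma IsQuadricPoints.add_le_card_independentTuples_four (h : IsQuadricPoints σ B K)
    (h2 : (2 : F) ≠ 0) (hV : finrank F V = 4) (hker : finrank F (ker B) ≤ 1) :
    ((#K - 2 * Fintype.card F) * #(independentTuples F K 3) +
      (Fintype.card F - 1) * #(nonorthogonalTriples B K) : ℝ) ≤ #(independentTuples F K 4) := by
  have hext : ∀ x ∈ independentTuples F K 3,
      (#K - 2 * Fintype.card F + (Fintype.card F - 1) *
        (if Pairwise fun i j => B (x i) (x j) ≠ 0 then 1 else 0) : ℝ) ≤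
      #{p ∈ K | p ∉ Submodule.span F (Set.range x)} := fun x hx => by
    have hrank := finrank_span_range_of_mem_independentTuples hx
    rw [cast_card_filter_notMem]
    split_ifs with hne
    · have hslice := h.sliceCard_le_of_mem_nonorthogonalTriples (m := 0) h2
        (mem_filter.2 ⟨hx, hne⟩) (fun i => Submodule.subset_span (Set.mem_range_self i)) hrank.le
      rw [pow_zero, mul_one] at hslice
      have : (sliceCard K (Submodule.span F (Set.range x)) : ℝ) ≤ Fintype.card F + 1 :=
        mod_cast hslice
      linarith
    · have hslice : (sliceCard K (Submodule.span F (Set.range x)) : ℝ) ≤ 2 * Fintype.card F := by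
        exact_mod_cast (h.sliceCard_le_two_mul_pow_of_finrank_add_one_lt (m := 1) h2 hker hrank
          (by omega)).trans_eq (by rw [pow_one])
      linarith
  rw [card_independentTuples_succ K 3, Nat.cast_sum]
  refine le_of_eq_of_le ?_ (sum_le_sum hext)
  rw [sum_add_distrib, sum_const, nsmul_eq_mul, ← mul_sum, sum_boole, nonorthogonalTriples]
  ring

lemma IsQuadricPoints.card_orthogonalPairs_le_of_finrank_eq_four (h : IsQuadricPoints σ B K)
    (hV : finrank F V = 4) (hker : finrank F (ker B) ≤ 1) :
    (#(orthogonalPairs B K) : ℝ) ≤ #K * (#K / Fintype.card F + Fintype.card F - 1) := by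
  have hq : (0 : ℝ) < Fintype.card F := Nat.cast_pos.2 Fintype.card_pos
  refine le_of_mul_le_mul_left ?_ hq
  calc (Fintype.card F * #(orthogonalPairs B K) : ℝ)
      ≤ #K ^ 2 + #K * Fintype.card F * (Fintype.card F - 1) :=
        h.card_mul_card_orthogonalPairs_le_of_finrank_eq_four hV hker
    _ = Fintype.card F * (#K * (#K / Fintype.card F + Fintype.card F - 1)) := by
        field_simp
        ring

theorem IsQuadricPoints.le_card_independentTuples_of_finrank_eq_four (h : IsQuadricPoints σ B K)
    (h2 : (2 : F) ≠ 0) (h3 : 3 ≤ Fintype.card F) (hV : finrank F V = 4)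
    (hker : finrank F (ker B) ≤ 1) (hK : 2 * Fintype.card F ≤ #K) :
    (#K * (#K - 1) * (#K - 2) * (#K - 3) - 2 * Fintype.card F * #K ^ 3 : ℝ) ≤
      #(independentTuples F K 4) := by
  have hU := h.card_orthogonalPairs_le_of_finrank_eq_four hV hker
  have hind := h.mul_sub_mul_le_card_independentTuples_three h2 h3 (by omega) hU
  have hnonorth := h.mul_sub_mul_le_card_nonorthogonalTriples h2 hU
  have htuples := h.add_le_card_independentTuples_four h2 hV hker
  have hq : (3 : ℝ) ≤ Fintype.card F := mod_cast h3
  have hkq : (2 * Fintype.card F : ℝ) ≤ #K := mod_cast hK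
  set q : ℝ := (Fintype.card F : ℝ)
  set k : ℝ := (#K : ℝ)
  set y := k / q
  have hk : k = q * y := (mul_div_cancel₀ k (by linarith)).symm
  have hy : 2 ≤ y := (le_div_iff₀ (by linarith)).2 hkq
  have hu : y + q - 1 ≤ k - 1 := by nlinarith
  calc k * (k - 1) * (k - 2) * (k - 3) - 2 * q * k ^ 3
      = k * ((k - 1) * (k - 2) * (k - 3) - 2 * q * k ^ 2) := by ring
    _ ≤ k * ((k - 2 * q) * ((k - 1) * (k - 2) - (q - 2) * (y + q - 1)) +
          (q - 1) * ((k - 1 - (y + q - 1)) * (2 * (k - 1 - (y + q - 1)) - k))) :=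
        mul_le_mul_of_nonneg_left (rank_four_estimate hq hy hk) (by linarith)
    _ = (k - 2 * q) * (k * ((k - 1) * (k - 2) - (q - 2) * (y + q - 1))) +
          (q - 1) * (k * ((k - 1 - (y + q - 1)) * (2 * (k - 1 - (y + q - 1)) - k))) := by ring
    _ ≤ (k - 2 * q) * #(independentTuples F K 3) + (q - 1) * #(nonorthogonalTriples B K) :=
        add_le_add (mul_le_mul_of_nonneg_left hind (by linarith))
          (mul_le_mul_of_nonneg_left (hnonorth hu) (by linarith))
    _ ≤ #(independentTuples F K 4) := htuples

end Counting

section RankFive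

variable {F V : Type*} [Field F] [AddCommGroup V] [Module F V] {σ : Dual F V}
  {B : BilinForm F V} {K : Finset V} {m : ℕ}

lemma finrank_span_range_sup_span_singleton [FiniteDimensional F V] {x : Fin m → V}
    (hx : x ∈ independentTuples F K m) {p : V} (hp : p ∉ Submodule.span F (Set.range x)) :
    finrank F ↥(Submodule.span F (Set.range x) ⊔ Submodule.span F {p}) = m + 1 := by
  rw [Submodule.finrank_sup_span_singleton hp, finrank_span_range_of_mem_independentTuples hx]

variable [Fintype F] [FiniteDimensional F V]

lemma IsQuadricPoints.card_orthogonalPairs_le_of_finrank_eq_five (h : IsQuadricPoints σ B K)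
    (hV : finrank F V = 5) (hker : finrank F (ker B) ≤ 1) :
    (#(orthogonalPairs B K) : ℝ) ≤ #K * (#K / Fintype.card F + Fintype.card F ^ 2 + 1) := by
  have hq : (0 : ℝ) < Fintype.card F := Nat.cast_pos.2 Fintype.card_pos
  refine le_of_mul_le_mul_left ?_ hq
  calc (Fintype.card F * #(orthogonalPairs B K) : ℝ)
      ≤ #K ^ 2 + #K * Fintype.card F ^ 3 + #K * Fintype.card F :=
        h.card_mul_card_orthogonalPairs_le_of_finrank_eq_five hV hker
    _ = Fintype.card F * (#K * (#K / Fintype.card F + Fintype.card F ^ 2 + 1)) := by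
        field_simp

lemma IsQuadricPoints.card_orthogonalTriples_le_of_finrank_eq_five (h : IsQuadricPoints σ B K)
    (h2 : (2 : F) ≠ 0) (hV : finrank F V = 5) (hker : finrank F (ker B) ≤ 1) {u : ℝ}
    (hU : #(orthogonalPairs B K) ≤ #K * u) :
    #(orthogonalTriples B K) ≤
      #K * (u * Fintype.card F ^ 2 + (Fintype.card F + 1) * Fintype.card F ^ 2) := by
  have hsum : (#(orthogonalTriples B K) : ℝ) ≤ #(orthogonalPairs B K) * Fintype.card F ^ 2 +
      #K * (Fintype.card F + 1) * Fintype.card F ^ 2 := by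
    exact_mod_cast (card_orthogonalTriples_le B K).trans
      (h.sum_orthogonalPairs_card_le (m := 2) h2 hV hker two_pos)
  have hmul := mul_le_mul_of_nonneg_right hU (sq_nonneg (Fintype.card F : ℝ))
  linarith

lemma IsQuadricPoints.sliceCard_sup_le_of_finrank_eq_five (h : IsQuadricPoints σ B K)
    (h2 : (2 : F) ≠ 0) (hV : finrank F V = 5) (hker : finrank F (ker B) ≤ 1) {x : Fin 3 → V}
    (hx : x ∈ independentTuples F K 3) {p : V} (hp : p ∉ Submodule.span F (Set.range x)) :
    (sliceCard K (Submodule.span F (Set.range x) ⊔ Submodule.span F {p}) : ℝ) ≤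
      2 * Fintype.card F ^ 2 := by
  exact_mod_cast h.sliceCard_le_two_mul_pow_of_finrank_add_one_lt (m := 2) h2 hker
    (finrank_span_range_sup_span_singleton hx hp) (by omega)

lemma IsQuadricPoints.sliceCard_span_range_le_two_mul_card (h : IsQuadricPoints σ B K)
    (h2 : (2 : F) ≠ 0) {x : Fin 3 → V} (hx : x ∈ independentTuples F K 3)
    (hxB : x ∉ orthogonalTriples B K) :
    (sliceCard K (Submodule.span F (Set.range x)) : ℝ) ≤ 2 * Fintype.card F := by
  obtain ⟨i, j, hij⟩ := exists_ne_zero_of_notMem_orthogonalTriples hx hxB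
  exact_mod_cast (h.sliceCard_span_range_le h2 (m := 1) hx hij).trans_eq (by rw [pow_one])

lemma IsQuadricPoints.sub_mul_sub_le_extensionCount_of_finrank_eq_five
    (h : IsQuadricPoints σ B K) (h2 : (2 : F) ≠ 0) (hV : finrank F V = 5)
    (hker : finrank F (ker B) ≤ 1) (hK : (2 * Fintype.card F ^ 2 : ℝ) ≤ #K) {x : Fin 3 → V}
    (hx : x ∈ independentTuples F K 3) :
    ((#K - Fintype.card F ^ 2) * (#K - 2 * Fintype.card F ^ 2) : ℝ) ≤
      extensionCount K (Submodule.span F (Set.range x)) :=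
  sub_mul_sub_le_extensionCount hK
    (by exact_mod_cast h.sliceCard_le_pow (finrank_span_range_of_mem_independentTuples hx).le)
    fun _ _ hp => h.sliceCard_sup_le_of_finrank_eq_five h2 hV hker hx hp

lemma IsQuadricPoints.sub_le_card_independentTuples_five (h : IsQuadricPoints σ B K)
    (h2 : (2 : F) ≠ 0) (hV : finrank F V = 5) (hker : finrank F (ker B) ≤ 1)
    (hK : (2 * Fintype.card F ^ 2 : ℝ) ≤ #K) :
    (4 * (Fintype.card F ^ 2 - Fintype.card F) * (#K - 2 * Fintype.card F ^ 2) *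
        #(independentTuples F K 3) -
      (#K - 2 * Fintype.card F ^ 2) * (5 * Fintype.card F ^ 2 - 4 * Fintype.card F - #K) *
        #(orthogonalTriples B K) : ℝ) ≤ #(independentTuples F K 5) := by
  set q : ℝ := (Fintype.card F : ℝ)
  have hq1 : 1 ≤ q := Nat.one_le_cast.2 Fintype.card_pos
  have hext : ∀ x ∈ independentTuples F K 3,
      4 * (q ^ 2 - q) * (#K - 2 * q ^ 2) - (#K - 2 * q ^ 2) * (5 * q ^ 2 - 4 * q - #K) *
        (if ∀ i j, B (x i) (x j) = 0 then 1 else 0) ≤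
      extensionCount K (Submodule.span F (Set.range x)) := fun x hx => by
    split_ifs with horth
    · linarith [h.sub_mul_sub_le_extensionCount_of_finrank_eq_five h2 hV hker hK hx]
    · have hslice := h.sliceCard_span_range_le_two_mul_card h2 hx fun hmem =>
        horth (mem_filter.1 hmem).2
      have hcount := two_mul_sub_mul_sub_le_extensionCount hK (by nlinarith)
        fun p _ hp => h.sliceCard_sup_le_of_finrank_eq_five h2 hV hker hx hp
      linarith [mul_le_mul_of_nonneg_left hslice (sub_nonneg.2 hK)]
  rw [card_independentTuples_add_two K 3, Nat.cast_sum]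
  refine le_of_eq_of_le ?_ (sum_le_sum hext)
  rw [sum_sub_distrib, sum_const, nsmul_eq_mul, ← mul_sum, sum_boole, orthogonalTriples]
  ring

lemma IsQuadricPoints.sub_mul_sub_le_extensionCount_of_mem_nonorthogonalTriples
    (h : IsQuadricPoints σ B K) (h2 : (2 : F) ≠ 0)
    (hK : ((Fintype.card F + 1) * Fintype.card F : ℝ) ≤ #K) {x : Fin 3 → V}
    (hx : x ∈ nonorthogonalTriples B K) :
    ((#K - 2 * Fintype.card F) * (#K - (Fintype.card F + 1) * Fintype.card F) : ℝ) ≤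
      extensionCount K (Submodule.span F (Set.range x)) := by
  obtain ⟨hind, hne⟩ := mem_filter.1 hx
  refine sub_mul_sub_le_extensionCount hK
    (h.sliceCard_span_range_le_two_mul_card h2 hind fun hmem => ?_) fun p _ hp => ?_
  · exact hne (show (0 : Fin 3) ≠ 1 by decide) ((mem_filter.1 hmem).2 0 1)
  · have hcard := h.sliceCard_le_of_mem_nonorthogonalTriples (m := 1) h2 hx
      (fun i => Submodule.mem_sup_left (Submodule.subset_span (Set.mem_range_self i)))
      (finrank_span_range_sup_span_singleton hind hp).le
    rw [pow_one] at hcard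
    exact_mod_cast hcard

lemma IsQuadricPoints.add_sub_le_card_independentTuples_five (h : IsQuadricPoints σ B K)
    (h2 : (2 : F) ≠ 0) (hV : finrank F V = 5) (hker : finrank F (ker B) ≤ 1)
    (hK : (2 * Fintype.card F ^ 2 : ℝ) ≤ #K) :
    ((#K - 2 * Fintype.card F) * (#K - 2 * Fintype.card F ^ 2) * #(independentTuples F K 3) +
        (#K - 2 * Fintype.card F) * (Fintype.card F ^ 2 - Fintype.card F) *
          #(nonorthogonalTriples B K) -
      (Fintype.card F ^ 2 - 2 * Fintype.card F) * (#K - 2 * Fintype.card F ^ 2) *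
        #(orthogonalTriples B K) : ℝ) ≤ #(independentTuples F K 5) := by
  set q : ℝ := (Fintype.card F : ℝ)
  have hq1 : 1 ≤ q := Nat.one_le_cast.2 Fintype.card_pos
  have hext : ∀ x ∈ independentTuples F K 3,
      (#K - 2 * q) * (#K - 2 * q ^ 2) + (#K - 2 * q) * (q ^ 2 - q) *
          (if Pairwise fun i j => B (x i) (x j) ≠ 0 then 1 else 0) -
        (q ^ 2 - 2 * q) * (#K - 2 * q ^ 2) * (if ∀ i j, B (x i) (x j) = 0 then 1 else 0) ≤
      extensionCount K (Submodule.span F (Set.range x)) := fun x hx => by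
    by_cases horth : ∀ i j, B (x i) (x j) = 0
    · rw [if_neg fun hne => hne (show (0 : Fin 3) ≠ 1 by decide) (horth 0 1), if_pos horth]
      linarith [h.sub_mul_sub_le_extensionCount_of_finrank_eq_five h2 hV hker hK hx]
    have hslice := h.sliceCard_span_range_le_two_mul_card h2 hx fun hmem =>
      horth (mem_filter.1 hmem).2
    rw [if_neg horth]
    split_ifs with hne
    · linarith [h.sub_mul_sub_le_extensionCount_of_mem_nonorthogonalTriples h2 (by nlinarith)
        (mem_filter.2 ⟨hx, hne⟩)]
    · linarith [sub_mul_sub_le_extensionCount hK hslice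
        fun p _ hp => h.sliceCard_sup_le_of_finrank_eq_five h2 hV hker hx hp]
  rw [card_independentTuples_add_two K 3, Nat.cast_sum]
  refine le_of_eq_of_le ?_ (sum_le_sum hext)
  rw [sum_sub_distrib, sum_add_distrib, sum_const, nsmul_eq_mul, ← mul_sum, sum_boole, ← mul_sum,
    sum_boole, nonorthogonalTriples, orthogonalTriples]
  ring

lemma IsQuadricPoints.le_card_independentTuples_five_of_le (h : IsQuadricPoints σ B K)
    (h2 : (2 : F) ≠ 0) (h3 : 3 ≤ Fintype.card F) (hV : finrank F V = 5)
    (hker : finrank F (ker B) ≤ 1) (hK : 2 * Fintype.card F ^ 2 ≤ #K)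
    (hK3 : #K ≤ 3 * Fintype.card F ^ 2) :
    (#K * (#K - 1) * (#K - 2) * (#K - 3) * (#K - 4) - 2 * Fintype.card F ^ 2 * #K ^ 4 : ℝ) ≤
      #(independentTuples F K 5) := by
  have hU := h.card_orthogonalPairs_le_of_finrank_eq_five hV hker
  have hind := h.mul_sub_mul_le_card_independentTuples_three h2 h3 (by nlinarith) hU
  have horth := h.card_orthogonalTriples_le_of_finrank_eq_five h2 hV hker hU
  have hkq : (2 * Fintype.card F ^ 2 : ℝ) ≤ #K := mod_cast hK
  have hkq3 : (#K : ℝ) ≤ 3 * Fintype.card F ^ 2 := mod_cast hK3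
  have htuples := h.sub_le_card_independentTuples_five h2 hV hker hkq
  have hq : (3 : ℝ) ≤ Fintype.card F := mod_cast h3
  set q : ℝ := (Fintype.card F : ℝ)
  set k : ℝ := (#K : ℝ)
  set y := k / q
  have hk : k = q * y := (mul_div_cancel₀ k (by linarith)).symm
  have hy : 2 * q ≤ y := (le_div_iff₀ (by linarith)).2 (by linarith)
  have hy3 : y ≤ 3 * q := (div_le_iff₀ (by linarith)).2 (by linarith)
  calc k * (k - 1) * (k - 2) * (k - 3) * (k - 4) - 2 * q ^ 2 * k ^ 4
      = k * ((k - 1) * (k - 2) * (k - 3) * (k - 4) - 2 * q ^ 2 * k ^ 3) := by ring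
    _ ≤ k * (4 * (q ^ 2 - q) * (k - 2 * q ^ 2) *
            ((k - 1) * (k - 2) - (q - 2) * (y + q ^ 2 + 1)) -
          (k - 2 * q ^ 2) * (5 * q ^ 2 - 4 * q - k) *
            ((y + q ^ 2 + 1) * q ^ 2 + (q + 1) * q ^ 2)) :=
        mul_le_mul_of_nonneg_left (rank_five_estimate_of_le hq hy hy3 hk) (Nat.cast_nonneg _)
    _ = 4 * (q ^ 2 - q) * (k - 2 * q ^ 2) *
            (k * ((k - 1) * (k - 2) - (q - 2) * (y + q ^ 2 + 1))) -
          (k - 2 * q ^ 2) * (5 * q ^ 2 - 4 * q - k) *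
            (k * ((y + q ^ 2 + 1) * q ^ 2 + (q + 1) * q ^ 2)) := by ring
    _ ≤ 4 * (q ^ 2 - q) * (k - 2 * q ^ 2) * #(independentTuples F K 3) -
          (k - 2 * q ^ 2) * (5 * q ^ 2 - 4 * q - k) * #(orthogonalTriples B K) := by
        have hcoeff : 0 ≤ 4 * (q ^ 2 - q) := by nlinarith
        have hcoeff' : 0 ≤ 5 * q ^ 2 - 4 * q - k := by nlinarith
        exact sub_le_sub
          (mul_le_mul_of_nonneg_left hind (mul_nonneg hcoeff (sub_nonneg.2 hkq)))
          (mul_le_mul_of_nonneg_left horth (mul_nonneg (sub_nonneg.2 hkq) hcoeff'))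
    _ ≤ #(independentTuples F K 5) := htuples

lemma IsQuadricPoints.le_card_independentTuples_five_of_ge (h : IsQuadricPoints σ B K)
    (h2 : (2 : F) ≠ 0) (h3 : 3 ≤ Fintype.card F) (hV : finrank F V = 5)
    (hker : finrank F (ker B) ≤ 1) (hK : 3 * Fintype.card F ^ 2 ≤ #K) :
    (#K * (#K - 1) * (#K - 2) * (#K - 3) * (#K - 4) - 2 * Fintype.card F ^ 2 * #K ^ 4 : ℝ) ≤
      #(independentTuples F K 5) := by
  have hU := h.card_orthogonalPairs_le_of_finrank_eq_five hV hker
  have hind := h.mul_sub_mul_le_card_independentTuples_three h2 h3 (by nlinarith) hU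
  have horth := h.card_orthogonalTriples_le_of_finrank_eq_five h2 hV hker hU
  have hnonorth := h.mul_sub_mul_le_card_nonorthogonalTriples h2 hU
  have hkq : (3 * Fintype.card F ^ 2 : ℝ) ≤ #K := mod_cast hK
  have htuples := h.add_sub_le_card_independentTuples_five h2 hV hker (by nlinarith)
  have hq : (3 : ℝ) ≤ Fintype.card F := mod_cast h3
  set q : ℝ := (Fintype.card F : ℝ)
  set k : ℝ := (#K : ℝ)
  set y := k / q
  have hk : k = q * y := (mul_div_cancel₀ k (by linarith)).symm
  have hy : 3 * q ≤ y := (le_div_iff₀ (by linarith)).2 (by linarith)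
  have hu : y + q ^ 2 + 1 ≤ k - 1 := by nlinarith
  have hkq1 : 0 ≤ k - 2 * q := by nlinarith
  have hkq2 : 0 ≤ k - 2 * q ^ 2 := by nlinarith
  have hcoeff : 0 ≤ q ^ 2 - q := by nlinarith
  have hcoeff' : 0 ≤ q ^ 2 - 2 * q := by nlinarith
  calc k * (k - 1) * (k - 2) * (k - 3) * (k - 4) - 2 * q ^ 2 * k ^ 4
      = k * ((k - 1) * (k - 2) * (k - 3) * (k - 4) - 2 * q ^ 2 * k ^ 3) := by ring
    _ ≤ k * ((k - 2 * q) * (k - 2 * q ^ 2) * ((k - 1) * (k - 2) - (q - 2) * (y + q ^ 2 + 1)) +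
          (k - 2 * q) * (q ^ 2 - q) *
            ((k - 1 - (y + q ^ 2 + 1)) * (2 * (k - 1 - (y + q ^ 2 + 1)) - k)) -
          (q ^ 2 - 2 * q) * (k - 2 * q ^ 2) *
            ((y + q ^ 2 + 1) * q ^ 2 + (q + 1) * q ^ 2)) :=
        mul_le_mul_of_nonneg_left (rank_five_estimate_of_ge hq hy hk) (Nat.cast_nonneg _)
    _ = (k - 2 * q) * (k - 2 * q ^ 2) * (k * ((k - 1) * (k - 2) - (q - 2) * (y + q ^ 2 + 1))) +
          (k - 2 * q) * (q ^ 2 - q) *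
            (k * ((k - 1 - (y + q ^ 2 + 1)) * (2 * (k - 1 - (y + q ^ 2 + 1)) - k))) -
          (q ^ 2 - 2 * q) * (k - 2 * q ^ 2) *
            (k * ((y + q ^ 2 + 1) * q ^ 2 + (q + 1) * q ^ 2)) := by ring
    _ ≤ (k - 2 * q) * (k - 2 * q ^ 2) * #(independentTuples F K 3) +
          (k - 2 * q) * (q ^ 2 - q) * #(nonorthogonalTriples B K) -
          (q ^ 2 - 2 * q) * (k - 2 * q ^ 2) * #(orthogonalTriples B K) := by
        gcongr
        exact hnonorth hu
    _ ≤ #(independentTuples F K 5) := htuples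

theorem IsQuadricPoints.le_card_independentTuples_of_finrank_eq_five (h : IsQuadricPoints σ B K)
    (h2 : (2 : F) ≠ 0) (h3 : 3 ≤ Fintype.card F) (hV : finrank F V = 5)
    (hker : finrank F (ker B) ≤ 1) (hK : 2 * Fintype.card F ^ 2 ≤ #K) :
    (#K * (#K - 1) * (#K - 2) * (#K - 3) * (#K - 4) - 2 * Fintype.card F ^ 2 * #K ^ 4 : ℝ) ≤
      #(independentTuples F K 5) := by
  obtain hle | hge := le_total (#K) (3 * Fintype.card F ^ 2)
  exacts [h.le_card_independentTuples_five_of_le h2 h3 hV hker hK hle,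
    h.le_card_independentTuples_five_of_ge h2 h3 hV hker hge]

end RankFive

section RankAtLeastSix

variable {F V : Type*} [Field F] [AddCommGroup V] [Module F V] {σ : Dual F V}
  {B : BilinForm F V} {K : Finset V} {S : Submodule F V} {m : ℕ}
  [Fintype F] [FiniteDimensional F V]

lemma IsQuadricPoints.sliceCard_le_of_finrank_add_one_eq (h : IsQuadricPoints σ B K)
    (h2 : (2 : F) ≠ 0) (hm : 2 ≤ m) (hV : finrank F V = m + 4) (hker : finrank F (ker B) ≤ 1)
    (hS : finrank F S = m + 3) : sliceCard K S ≤ (Fintype.card F + 1) * Fintype.card F ^ m :=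
  h.sliceCard_le_card_add_one_mul_pow h2 hS.le fun T _ hT => by
    have := two_mul_finrank_le_of_isTotallyIsotropic h.symm hT
    omega

lemma IsQuadricPoints.mul_sq_le_mul_extensionCount (h : IsQuadricPoints σ B K)
    (h2 : (2 : F) ≠ 0) (hm : 2 ≤ m) (hV : finrank F V = m + 4) (hker : finrank F (ker B) ≤ 1)
    (hK : ((Fintype.card F + 1) * Fintype.card F ^ m : ℝ) ≤ #K)
    (hS : finrank F S = m + 2) :
    ((Fintype.card F + 1) * (#K - (Fintype.card F + 1) * Fintype.card F ^ m) ^ 2 : ℝ) ≤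
      Fintype.card F * extensionCount K S := by
  have hsup : ∀ v ∉ S, sliceCard K (S ⊔ Submodule.span F {v}) ≤
      (Fintype.card F + 1) * Fintype.card F ^ m := fun v hv =>
    h.sliceCard_le_of_finrank_add_one_eq h2 hm hV hker
      (by rw [Submodule.finrank_sup_span_singleton hv, hS])
  have hpencil := sub_sliceCard_le_of_pencil (K := K) (by omega) hsup
  have hcount : (#K - sliceCard K S) * (#K - (Fintype.card F + 1) * Fintype.card F ^ m : ℝ) ≤
      extensionCount K S :=
    sub_mul_sub_le_extensionCount hK le_rfl fun p _ hp => by exact_mod_cast hsup p hp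
  push_cast at hpencil
  calc ((Fintype.card F + 1) * (#K - (Fintype.card F + 1) * Fintype.card F ^ m) ^ 2 : ℝ)
      = (Fintype.card F + 1) * (#K - (Fintype.card F + 1) * Fintype.card F ^ m) *
          (#K - (Fintype.card F + 1) * Fintype.card F ^ m) := by ring
    _ ≤ Fintype.card F * (#K - sliceCard K S) *
          (#K - (Fintype.card F + 1) * Fintype.card F ^ m) :=
        mul_le_mul_of_nonneg_right (by linarith) (sub_nonneg.2 hK)
    _ ≤ Fintype.card F * extensionCount K S := by
        rw [mul_assoc]
        exact mul_le_mul_of_nonneg_left hcount (Nat.cast_nonneg _)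

lemma IsQuadricPoints.card_independentTuples_mul_sq_le (h : IsQuadricPoints σ B K)
    (h2 : (2 : F) ≠ 0) (hm : 2 ≤ m) (hV : finrank F V = m + 4) (hker : finrank F (ker B) ≤ 1)
    (hK : ((Fintype.card F + 1) * Fintype.card F ^ m : ℝ) ≤ #K) :
    (#(independentTuples F K (m + 2)) *
        ((Fintype.card F + 1) * (#K - (Fintype.card F + 1) * Fintype.card F ^ m) ^ 2) : ℝ) ≤
      Fintype.card F * #(independentTuples F K (m + 4)) := by
  rw [card_independentTuples_add_two K (m + 2), Nat.cast_sum, mul_sum, ← nsmul_eq_mul]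
  exact card_nsmul_le_sum _ _ _ fun x hx => h.mul_sq_le_mul_extensionCount h2 hm hV hker hK
    (finrank_span_range_of_mem_independentTuples hx)

theorem IsQuadricPoints.le_card_independentTuples_of_six_le_finrank (h : IsQuadricPoints σ B K)
    (h2 : (2 : F) ≠ 0) (h3 : 3 ≤ Fintype.card F) (hm : 2 ≤ m) (hV : finrank F V = m + 4)
    (hker : finrank F (ker B) ≤ 1) (hK : 2 * Fintype.card F ^ (m + 1) ≤ #K) :
    (#K ^ (m + 4) - 2 * Fintype.card F ^ (m + 1) * #K ^ (m + 3) : ℝ) ≤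
      #(independentTuples F K (m + 4)) := by
  have hind := h.pow_mul_sub_le_card_independentTuples (m := m + 1) (by omega)
  have hq : (3 : ℝ) ≤ Fintype.card F := mod_cast h3
  have hkq : (2 * Fintype.card F ^ (m + 1) : ℝ) ≤ #K := mod_cast hK
  have hgeom := geom_sum_mul (Fintype.card F : ℝ) (m + 1)
  set q : ℝ := (Fintype.card F : ℝ)
  set k : ℝ := (#K : ℝ)
  set s := ∑ j ∈ range (m + 1), q ^ j
  have hu : 0 ≤ q ^ m := by positivity
  have hkq' : 2 * q * q ^ m ≤ k := by linarith [pow_succ q m]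
  have hcount := h.card_independentTuples_mul_sq_le h2 hm hV hker (by nlinarith)
  have hs : k * (q - 1) - q * q ^ m ≤ (q - 1) * (k - s) := by linarith [pow_succ q m]
  refine le_of_mul_le_mul_left ?_ (show 0 < q * (q - 1) by nlinarith)
  calc q * (q - 1) * (k ^ (m + 4) - 2 * q ^ (m + 1) * k ^ (m + 3))
      = k ^ (m + 1) * (q * (q - 1) * k ^ 2 * (k - 2 * q * q ^ m)) := by ring
    _ ≤ k ^ (m + 1) * ((q + 1) * (k - (q + 1) * q ^ m) ^ 2 * (k * (q - 1) - q * q ^ m)) :=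
        mul_le_mul_of_nonneg_left (pencil_estimate hq hu hkq') (by positivity)
    _ ≤ k ^ (m + 1) * ((q + 1) * (k - (q + 1) * q ^ m) ^ 2 * ((q - 1) * (k - s))) := by gcongr
    _ = (q - 1) * (k ^ (m + 1) * (k - s) * ((q + 1) * (k - (q + 1) * q ^ m) ^ 2)) := by ring
    _ ≤ (q - 1) * (#(independentTuples F K (m + 2)) * ((q + 1) * (k - (q + 1) * q ^ m) ^ 2)) := by
        gcongr
        linarith
    _ ≤ (q - 1) * (q * #(independentTuples F K (m + 4))) :=
        mul_le_mul_of_nonneg_left hcount (by linarith)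
    _ = q * (q - 1) * #(independentTuples F K (m + 4)) := by ring

end RankAtLeastSix

section DependentTuples

variable {F V : Type*} [Field F] [AddCommGroup V] [Module F V] {σ : Dual F V}
  {B : BilinForm F V} {K : Finset V} {m : ℕ}

/-- The linearly dependent `m`-tuples of distinct points of `K`. In homogeneous coordinates these
are the affinely dependent tuples. -/
noncomputable def dependentTuples (F : Type*) {V : Type*} [Field F] [AddCommGroup V] [Module F V]
    (K : Finset V) (m : ℕ) : Finset (Fin m → V) :=
  {x ∈ Fintype.piFinset fun _ => K | Function.Injective x ∧ ¬LinearIndependent F x}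

lemma mem_dependentTuples {x : Fin m → V} :
    x ∈ dependentTuples F K m ↔
      (∀ i, x i ∈ K) ∧ Function.Injective x ∧ ¬LinearIndependent F x := by
  simp [dependentTuples]

lemma card_filter_injective_piFinset {α : Type*} (K : Finset α) (m : ℕ) :
    #{x ∈ Fintype.piFinset fun _ : Fin m => K | Function.Injective x} = (#K).descFactorial m := by
  have hcard : Fintype.card (Fin m ↪ K) = (#K).descFactorial m := by simp
  rw [← hcard, ← card_univ]
  symm
  refine card_nbij (fun f i => (f i : α)) (fun f _ => ?_) (fun f _ g _ hfg => ?_) fun x hx => ?_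
  · exact mem_filter.2
      ⟨Fintype.mem_piFinset.2 fun i => (f i).2, Subtype.val_injective.comp f.injective⟩
  · ext i
    exact congrFun hfg i
  · simp only [coe_filter, Fintype.mem_piFinset, Set.mem_ofPred_eq] at hx
    exact ⟨⟨fun i => ⟨x i, hx.1 i⟩, fun i j hij => hx.2 (congrArg Subtype.val hij)⟩, by simp, rfl⟩

lemma card_dependentTuples_add_card_independentTuples (F : Type*) {V : Type*} [Field F]
    [AddCommGroup V] [Module F V] (K : Finset V) (m : ℕ) :
    #(dependentTuples F K m) + #(independentTuples F K m) = (#K).descFactorial m := by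
  have hsplit := card_filter_add_card_filter_not
    (s := {x ∈ Fintype.piFinset fun _ : Fin m => K | Function.Injective x})
    fun x => LinearIndependent F x
  rw [card_filter_injective_piFinset, filter_filter, filter_filter,
    filter_congr fun x _ => and_iff_right_of_imp LinearIndependent.injective] at hsplit
  rwa [add_comm]

lemma cast_descFactorial_eq_prod (n k : ℕ) :
    (n.descFactorial k : ℝ) = ∏ j ∈ range k, ((n : ℝ) - j) := by
  rw [← descPochhammer_eval_eq_descFactorial, descPochhammer_eval_eq_prod_range]

variable [Fintype F] [FiniteDimensional F V]

lemma IsQuadricPoints.descFactorial_sub_le_card_independentTuples (h : IsQuadricPoints σ B K)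
    (h2 : (2 : F) ≠ 0) (h3 : 3 ≤ Fintype.card F) (hV : finrank F V = m + 4)
    (hker : finrank F (ker B) ≤ 1) (hK : 2 * Fintype.card F ^ (m + 1) ≤ #K) :
    ((#K).descFactorial (m + 4) - #K ^ (m + 3) * (2 * Fintype.card F ^ (m + 1)) : ℝ) ≤
      #(independentTuples F K (m + 4)) := by
  obtain rfl | rfl | hm : m = 0 ∨ m = 1 ∨ 2 ≤ m := by omega
  · have hfour := h.le_card_independentTuples_of_finrank_eq_four h2 h3 hV hker (by simpa using hK)
    have hdesc : ((#K).descFactorial 4 : ℝ) = #K * (#K - 1) * (#K - 2) * (#K - 3) := by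
      rw [cast_descFactorial_eq_prod]
      simp [prod_range_succ]
    rw [zero_add, zero_add, zero_add, hdesc]
    linarith
  · have hfive := h.le_card_independentTuples_of_finrank_eq_five h2 h3 hV hker hK
    have hdesc : ((#K).descFactorial 5 : ℝ) = #K * (#K - 1) * (#K - 2) * (#K - 3) * (#K - 4) := by
      rw [cast_descFactorial_eq_prod]
      simp [prod_range_succ]
    norm_num only [hdesc]
    linarith
  · have hlower := h.le_card_independentTuples_of_six_le_finrank h2 h3 hm hV hker hK
    have hdesc : ((#K).descFactorial (m + 4) : ℝ) ≤ #K ^ (m + 4) := by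
      exact_mod_cast Nat.descFactorial_le_pow _ _
    linarith

theorem IsQuadricPoints.card_dependentTuples_le (h : IsQuadricPoints σ B K)
    (h2 : (2 : F) ≠ 0) (h3 : 3 ≤ Fintype.card F) (hV : finrank F V = m + 4)
    (hker : finrank F (ker B) ≤ 1) :
    #(dependentTuples F K (m + 4)) ≤ #K ^ (m + 3) * (2 * Fintype.card F ^ (m + 1)) := by
  have hcount := card_dependentTuples_add_card_independentTuples F K (m + 4)
  obtain hK | hK := le_total (#K) (2 * Fintype.card F ^ (m + 1))
  · calc #(dependentTuples F K (m + 4)) ≤ #K ^ (m + 4) := by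
          have := Nat.descFactorial_le_pow (#K) (m + 4)
          omega
      _ ≤ #K ^ (m + 3) * (2 * Fintype.card F ^ (m + 1)) := by
          rw [pow_succ]
          exact Nat.mul_le_mul_left _ hK
  · have hlower := h.descFactorial_sub_le_card_independentTuples h2 h3 hV hker hK
    rw [← hcount] at hlower
    push_cast at hlower
    have : (#(dependentTuples F K (m + 4)) : ℝ) ≤
        #K ^ (m + 3) * (2 * Fintype.card F ^ (m + 1)) := by linarith
    exact_mod_cast this

end DependentTuples

section CommonPoles

variable {F : Type*} [Field F] {ι : Type*} [Fintype ι] {E : Set (ι → F)} {y z : ι → F} {t : F}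
  {m : ℕ}

/-- The points of `E` at distance `t` from both `y` and `z`. -/
def commonPoles (E : Set (ι → F)) (y z : ι → F) (t : F) : Set (ι → F) :=
  {w | w ∈ E ∧ ∑ j, (w j - y j) ^ 2 = t ∧ ∑ j, (w j - z j) ^ 2 = t}

/-- The homogenization `⟪v, v'⟫ - t s s'` of the equation `‖v‖ = t`, in homogeneous coordinates
`(s, v)`. -/
def sphereForm (ι : Type*) [Fintype ι] (t : F) : BilinForm F (F × (ι → F)) :=
  (dotProductBilin F F).compl₁₂ (LinearMap.snd F F (ι → F)) (LinearMap.snd F F (ι → F)) -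
    t • (LinearMap.mul F F).compl₁₂ (LinearMap.fst F F (ι → F)) (LinearMap.fst F F (ι → F))

@[simp]
lemma sphereForm_apply (v w : F × (ι → F)) :
    sphereForm ι t v w = v.2 ⬝ᵥ w.2 - t * (v.1 * w.1) := rfl

lemma isSymm_sphereForm : (sphereForm ι t).IsSymm :=
  ⟨fun v w => by simp [dotProduct_comm v.2, mul_comm v.1]⟩

lemma ker_sphereForm (ht : t ≠ 0) : ker (sphereForm ι t) = ⊥ := by
  rw [LinearMap.ker_eq_bot']
  intro v hv
  refine Prod.ext ?_ (dotProduct_eq_zero v.2 fun w => ?_)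
  · simpa [ht] using LinearMap.congr_fun hv (1, 0)
  · simpa using LinearMap.congr_fun hv (0, w)

/-- The linear functional whose kernel is the hyperplane of points equidistant from `y` and `z`,
in homogeneous coordinates `(s, s y + v)`. -/
def bisectorFunctional (y z : ι → F) : Dual F (F × (ι → F)) :=
  2 • dotProductBilin F F (z - y) ∘ₗ LinearMap.snd F F (ι → F) -
    ((z - y) ⬝ᵥ (z - y)) • LinearMap.fst F F (ι → F)

@[simp]
lemma bisectorFunctional_apply (v : F × (ι → F)) :
    bisectorFunctional y z v = 2 * ((z - y) ⬝ᵥ v.2) - ((z - y) ⬝ᵥ (z - y)) * v.1 := by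
  simp [bisectorFunctional]

lemma bisectorFunctional_ne_zero (h2 : (2 : F) ≠ 0) (hyz : y ≠ z) :
    bisectorFunctional y z ≠ 0 := fun hzero =>
  sub_ne_zero.2 hyz.symm <| dotProduct_eq_zero _ fun w => by
    simpa [h2] using LinearMap.congr_fun hzero (0, w)

lemma one_sub_mem_ker_bisectorFunctional {w : ι → F} (hw : w ∈ commonPoles E y z t) :
    (1, w - y) ∈ ker (bisectorFunctional y z) := by
  obtain ⟨-, hy, hz⟩ := hw
  have hdot : ∀ v : ι → F, ∑ j, (w j - v j) ^ 2 = (w - v) ⬝ᵥ (w - v) := fun v => by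
    simp [dotProduct, sq]
  have hzy : w - z = (w - y) - (z - y) := by abel
  rw [hdot] at hy hz
  rw [hzy, sub_dotProduct, dotProduct_sub (w - y) (w - y), dotProduct_sub (z - y) (w - y), hy,
    dotProduct_comm (w - y)] at hz
  rw [LinearMap.mem_ker, bisectorFunctional_apply]
  linear_combination -hz

lemma linearIndependent_one_prodMk_iff {κ W : Type*} [AddCommGroup W] [Module F W]
    (x : κ → W) : LinearIndependent F (fun i => ((1 : F), x i)) ↔ AffineIndependent F x := by
  rw [linearIndependent_iff', affineIndependent_iff]
  refine forall₂_congr fun s g => ?_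
  have hsum : ∑ i ∈ s, g i • ((1 : F), x i) = (∑ i ∈ s, g i, ∑ i ∈ s, g i • x i) := by
    simp [Prod.ext_iff, Prod.fst_sum, Prod.snd_sum]
  rw [hsum, Prod.mk_eq_zero, and_imp]

lemma finrank_ker_restrict_add_finrank_le {V : Type*} [AddCommGroup V] [Module F V]
    [FiniteDimensional F V] {B : BilinForm F V} (hsymm : B.IsSymm) (hB : ker B = ⊥)
    (S : Submodule F V) : finrank F (ker (B.restrict S)) + finrank F S ≤ finrank F V := by
  have hle : (ker (B.restrict S)).map S.subtype ≤ B.orthogonal S := by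
    rintro _ ⟨v, hv, rfl⟩ w hw
    rw [hsymm.eq]
    exact LinearMap.congr_fun (LinearMap.mem_ker.1 hv) ⟨w, hw⟩
  have hdim := LinearMap.BilinForm.finrank_add_finrank_orthogonal' (B := B) S
  rw [hB, inf_bot_eq, finrank_bot, add_zero] at hdim
  have := Submodule.finrank_mono hle
  rw [Submodule.finrank_map_subtype_eq] at this
  omega

lemma finrank_ker_bisectorFunctional (h2 : (2 : F) ≠ 0) (hyz : y ≠ z) :
    finrank F (ker (bisectorFunctional y z)) = Fintype.card ι := by
  have hadd := Dual.finrank_ker_add_one_of_ne_zero (bisectorFunctional_ne_zero h2 hyz)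
  rw [finrank_prod, finrank_self, finrank_fintype_fun_eq_card] at hadd
  omega

lemma finrank_ker_restrict_sphereForm_le_one (h2 : (2 : F) ≠ 0) (ht : t ≠ 0) (hyz : y ≠ z) :
    finrank F (ker ((sphereForm ι t).restrict (ker (bisectorFunctional y z)))) ≤ 1 := by
  have hradical := finrank_ker_restrict_add_finrank_le isSymm_sphereForm (ker_sphereForm ht)
    (ker (bisectorFunctional y z))
  rw [finrank_prod, finrank_self, finrank_fintype_fun_eq_card] at hradical
  have := finrank_ker_bisectorFunctional h2 hyz
  omega

variable [Finite F]

/-- The common poles `w` of `y` and `z` in homogeneous coordinates `(1, w - y)`. -/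
noncomputable def homogeneousPoles (E : Set (ι → F)) (y z : ι → F) (t : F) :
    Finset (ker (bisectorFunctional y z)) :=
  (Set.toFinite {a | a.1.1 = 1 ∧ y + a.1.2 ∈ commonPoles E y z t}).toFinset

lemma mem_homogeneousPoles {a : ker (bisectorFunctional y z)} :
    a ∈ homogeneousPoles E y z t ↔ a.1.1 = 1 ∧ y + a.1.2 ∈ commonPoles E y z t := by
  simp [homogeneousPoles]

lemma isQuadricPoints_homogeneousPoles :
    IsQuadricPoints (LinearMap.fst F F (ι → F) ∘ₗ (ker (bisectorFunctional y z)).subtype)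
      ((sphereForm ι t).restrict (ker (bisectorFunctional y z))) (homogeneousPoles E y z t) where
  symm := ⟨fun v w => isSymm_sphereForm.eq v.1 w.1⟩
  height a ha := (mem_homogeneousPoles.1 ha).1
  isotropic a ha := by
    obtain ⟨hone, -, hy, -⟩ := mem_homogeneousPoles.1 ha
    simpa [hone, dotProduct, ← sq, sub_eq_zero] using hy

lemma ncard_commonPoles : (commonPoles E y z t).ncard = #(homogeneousPoles E y z t) := by
  have himage : commonPoles E y z t =
      (fun a : ker (bisectorFunctional y z) => y + a.1.2) '' homogeneousPoles E y z t := by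
    refine Set.Subset.antisymm (fun w hw => ?_) ?_
    · exact ⟨⟨_, one_sub_mem_ker_bisectorFunctional hw⟩, mem_homogeneousPoles.2 (by simpa), by simp⟩
    · rintro _ ⟨a, ha, rfl⟩
      exact (mem_homogeneousPoles.1 ha).2
  have hinj : Set.InjOn (fun a : ker (bisectorFunctional y z) => y + a.1.2)
      (homogeneousPoles E y z t) := fun a ha b hb hab => Subtype.ext <| Prod.ext
    ((mem_homogeneousPoles.1 ha).1.trans (mem_homogeneousPoles.1 hb).1.symm) (add_left_cancel hab)
  rw [himage, hinj.ncard_image, Set.ncard_coe_finset]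

lemma ncard_not_affineIndependent_le :
    {x : Fin m → ι → F | (∀ i, x i ∈ commonPoles E y z t) ∧ Function.Injective x ∧
      ¬AffineIndependent F x}.ncard ≤ #(dependentTuples F (homogeneousPoles E y z t) m) := by
  rw [← Set.ncard_coe_finset]
  refine (Set.ncard_le_ncard ?_ (Set.toFinite _)).trans
    (Set.ncard_image_le (f := fun x i => y + (x i).1.2) (Set.toFinite _))
  rintro x ⟨hx, hinj, hdep⟩
  refine ⟨fun i => ⟨_, one_sub_mem_ker_bisectorFunctional (hx i)⟩, ?_, by simp⟩
  refine mem_dependentTuples.2 ⟨fun i => mem_homogeneousPoles.2 (by simpa using hx i),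
    fun i j hij => hinj (sub_left_injective (congrArg (fun a => a.1.2) hij)), fun hind => hdep ?_⟩
  have haff := (linearIndependent_one_prodMk_iff _).1
    (hind.map' _ (ker (bisectorFunctional y z)).ker_subtype)
  have htranslate : (fun i => x i - y) = -y +ᵥ x := by
    ext
    simp [sub_eq_neg_add]
  exact (affineIndependent_vadd F).1 (htranslate ▸ haff)

end CommonPoles

end AffineQuadric

/-- For fixed distinct `y, z ∈ E`, the number of tuples of `d` pairwise
distinct common poles of `y` and `z` in `E` that are affinely dependent is at
most `k_{(y,z)}^(d-1) · 2 q^(d-3)`, where `k_{(y,z)}` is the number of common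
poles of `y` and `z` in `E`. -/
theorem affinely_dependent_tuple_count
    {q d : ℕ} (F : Type*) [Field F] [Fintype F]
    (hcard : Fintype.card F = q) (hq : Odd q)
    (hd : 4 ≤ d) (t : F) (ht : t ≠ 0)
    (E : Set (Fin d → F)) (y z : Fin d → F)
    (hyE : y ∈ E) (hzE : z ∈ E) (hyz : y ≠ z) :
    Set.ncard {x : Fin d → (Fin d → F) |
        (∀ i, x i ∈ E ∧ ∑ j, (x i j - y j) ^ 2 = t ∧ ∑ j, (x i j - z j) ^ 2 = t) ∧
        Function.Injective x ∧ ¬ AffineIndependent F x}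
      ≤ (Set.ncard {w : Fin d → F | w ∈ E ∧
            ∑ j, (w j - y j) ^ 2 = t ∧ ∑ j, (w j - z j) ^ 2 = t}) ^ (d - 1)
          * (2 * q ^ (d - 3)) := by
  subst hcard
  obtain ⟨m, rfl⟩ : ∃ m, d = m + 4 := ⟨d - 4, by omega⟩
  have h2 : (2 : F) ≠ 0 := Ring.two_ne_zero fun hchar =>
    Nat.not_even_iff_odd.2 hq (Nat.even_iff.2 (FiniteField.even_card_of_char_two hchar))
  have h3 : 3 ≤ Fintype.card F := by
    have := Fintype.one_lt_card (α := F)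
    obtain ⟨n, hn⟩ := hq
    omega
  have hV := AffineQuadric.finrank_ker_bisectorFunctional h2 hyz
  have hker := AffineQuadric.finrank_ker_restrict_sphereForm_le_one h2 ht hyz
  rw [Fintype.card_fin] at hV
  have hdep := (AffineQuadric.isQuadricPoints_homogeneousPoles (E := E)).card_dependentTuples_le
    h2 h3 hV hker
  rw [← AffineQuadric.ncard_commonPoles] at hdep
  exact AffineQuadric.ncard_not_affineIndependent_le.trans hdep
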